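/- There exists a constant C > 0 such that for every real x ≥ 1 and every nonzero ideal K of ℤ[i], the number of pairs (I, J) of nonzero ideals of ℤ[i] with N(I) ≤ x, N(J) ≤ x and I ⊔ J = K differs from π²x²/(16·ζ_{ℚ(i)}(2)·N(K)²) by at most C·x^(4/3)/N(K)^(4/3). -/

import Mathlib

open Real

/-- The absolute norm of an ideal of `ℤ[i]`: the cardinality of the quotient ring. -/
noncomputable def normI (I : Ideal GaussianInt) : ℕ := Nat.card (GaussianInt ⧸ I)

/-- `P x` : pairs of nonzero ideals of `ℤ[i]` with both norms at most `x`. -/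
noncomputable def P (x : ℝ) : Set (Ideal GaussianInt × Ideal GaussianInt) :=
  {p | p.1 ≠ ⊥ ∧ p.2 ≠ ⊥ ∧ (normI p.1 : ℝ) ≤ x ∧ (normI p.2 : ℝ) ≤ x}

/-- `ζ_{ℚ(i)}(2)`, the sum of `1/N(I)²` over nonzero ideals of `ℤ[i]`. -/
noncomputable def zetaQi2 : ℝ := ∑' I : {I : Ideal GaussianInt // I ≠ ⊥}, 1 / (normI I.1 : ℝ) ^ 2

/-! Scaling by `K` reduces to coprime pairs, and Möbius inversion over ideals writes the number of
coprime pairs as `∑ μ(D) A(x / N(D))²`, where `A(t)` counts the nonzero ideals of norm at most `t`.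
Hence an estimate `A(t) = κt + O(t ^ θ)` with `0 < θ ≤ 1` gives the main term `κ²x² / ζ(2)` with
error `O(x ^ (1 + θ))`, because `∑ N(D) ^ (-(1 + θ))` converges. For `ℤ[i]` one has `κ = π / 4`, and
the exponent `θ = 1 / 3` is the Voronoi–Sierpiński bound in the Gauss circle problem. Nonzero ideals
correspond to the Gaussian integers `a + bi` with `a > 0` and `b ≥ 0`, which are counted octant by
octant by summing `⌊√(t - n²) - n⌋`. The smooth part of this sum is an area, by the trapezoid rule.
The sawtooth part is a derivative of the periodic Bernoulli function `B₂({y})`, so it lies between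
two difference quotients of `B₂`, whose absolutely convergent Fourier series turns them into
exponential sums; van der Corput's second-derivative test bounds those. -/

section ExponentialSums

open Finset FourierTransform

theorem sum_range_eq_of_mul_sub_eq {R : Type*} [CommRing R] {c u : ℕ → R} {m : ℕ}
    (h : ∀ n ≤ m, c n * (u n - u (n + 1)) = u n) :
    ∑ n ∈ range (m + 1), u n =
      c 0 * u 0 - c m * u (m + 1) + ∑ n ∈ range m, (c (n + 1) - c n) * u (n + 1) := by
  induction m with
  | zero => simpa [mul_sub] using (h 0 le_rfl).symm
  | succ m ih =>
    rw [sum_range_succ, ih fun n hn ↦ h n (by omega), sum_range_succ _ m]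
    linear_combination -h (m + 1) le_rfl

theorem two_mul_le_sin_pi_mul {δ g : ℝ} (hδ : 0 ≤ δ) (hg : g ∈ Set.Icc δ (1 - δ)) :
    2 * δ ≤ sin (π * g) := by
  wlog h : g ≤ 1 / 2 generalizing g
  · have := this (g := 1 - g) ⟨by linarith [hg.2], by linarith [hg.1]⟩ (by linarith)
    rwa [mul_sub, mul_one, sin_pi_sub] at this
  calc 2 * δ ≤ 2 / π * (π * g) := by
        rw [← mul_assoc, div_mul_cancel₀ _ pi_ne_zero]; linarith [hg.1]
    _ ≤ sin (π * g) :=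
        mul_le_sin (mul_nonneg pi_pos.le (hδ.trans hg.1)) (by nlinarith [pi_pos])

theorem cot_antitoneOn_Ioo : AntitoneOn cot (Set.Ioo 0 π) := by
  intro a ha b hb hab
  have hsa := sin_pos_of_mem_Ioo ha
  have hsb := sin_pos_of_mem_Ioo hb
  have hsub : 0 ≤ sin (b - a) :=
    sin_nonneg_of_nonneg_of_le_pi (by linarith) (by linarith [ha.1, hb.2])
  rw [sin_sub] at hsub
  rw [cot_eq_cos_div_sin, cot_eq_cos_div_sin, div_le_div_iff₀ hsb hsa]
  linarith

theorem abs_cot_le_inv_sin {t : ℝ} (ht : 0 < sin t) : |cot t| ≤ (sin t)⁻¹ := by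
  rw [cot_eq_cos_div_sin, abs_div, abs_of_pos ht, inv_eq_one_div]
  gcongr
  exact abs_cos_le_one t

theorem one_add_cot_mul_I_div_two_mul_one_sub_fourierChar {g : ℝ} (hg : sin (π * g) ≠ 0) :
    (1 + cot (π * g) * Complex.I) / 2 * (1 - 𝐞 g) = 1 := by
  have hs : Complex.sin (π * g) ≠ 0 := mod_cast hg
  have hexp : (𝐞 g : ℂ) =
      1 - 2 * Complex.sin (π * g) ^ 2
        + 2 * Complex.sin (π * g) * Complex.cos (π * g) * Complex.I := by
    rw [fourierChar_apply, show ((2 * π * g : ℝ) : ℂ) = 2 * (π * g) by push_cast; ring,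
      Complex.exp_mul_I, Complex.cos_two_mul, Complex.sin_two_mul, Complex.cos_sq']
    ring
  rw [hexp, cot_eq_cos_div_sin]
  push_cast
  field_simp
  linear_combination 2 * Complex.sin (π * g) *
    (Complex.sin_sq_add_cos_sq (π * g) - Complex.cos (π * g) ^ 2 * Complex.I_sq)

theorem norm_sum_range_le_of_antitone {u : ℕ → ℂ} {k : ℕ → ℝ} {m : ℕ} {B : ℝ}
    (hu : ∀ n, ‖u n‖ ≤ 1) (hk : ∀ n < m, k (n + 1) ≤ k n) (hB : ∀ n ≤ m, |k n| ≤ B)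
    (hrec : ∀ n ≤ m, (1 + k n * Complex.I) / 2 * (u n - u (n + 1)) = u n) :
    ‖∑ n ∈ range (m + 1), u n‖ ≤ 1 + 2 * B := by
  have hB0 := abs_le.1 (hB 0 m.zero_le)
  have hBm := abs_le.1 (hB m le_rfl)
  have hend (n j) (hn : n ≤ m) : ‖(1 + k n * Complex.I) / 2 * u j‖ ≤ (1 + B) / 2 := by
    rw [norm_mul, norm_div, Complex.norm_two]
    refine (mul_le_of_le_one_right (by positivity) (hu j)).trans ?_
    gcongr
    refine (norm_add_le _ _).trans ?_
    simpa using hB n hn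
  have htail : ‖∑ n ∈ range m, ((1 + k (n + 1) * Complex.I) / 2 - (1 + k n * Complex.I) / 2) *
      u (n + 1)‖ ≤ (k 0 - k m) / 2 := by
    rw [← sum_range_sub', sum_div]
    refine norm_sum_le_of_le _ fun n hn ↦ ?_
    rw [show (1 + k (n + 1) * Complex.I) / 2 - (1 + k n * Complex.I) / 2 =
      ((k (n + 1) - k n) / 2 : ℝ) * Complex.I by push_cast; ring, norm_mul, norm_mul,
      Complex.norm_I, Complex.norm_real, mul_one, norm_eq_abs,
      abs_of_nonpos (by linarith [hk n (mem_range.1 hn)])]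
    refine (mul_le_of_le_one_right ?_ (hu _)).trans_eq ?_ <;> linarith [hk n (mem_range.1 hn)]
  rw [sum_range_eq_of_mul_sub_eq hrec]
  refine (norm_add_le_of_le (norm_sub_le_of_le (hend 0 0 m.zero_le) (hend m _ le_rfl))
    htail).trans ?_
  linarith

/-- The Kusmin–Landau inequality. -/
theorem norm_sum_fourierChar_le_of_monotoneOn {f : ℕ → ℝ} {m : ℕ} {δ : ℝ} (hδ : 0 < δ)
    (hmono : MonotoneOn (fun n ↦ f (n + 1) - f n) (Set.Iio m))
    (hmem : ∀ n < m, f (n + 1) - f n ∈ Set.Icc δ (1 - δ)) :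
    ‖∑ n ∈ range m, (𝐞 (f n) : ℂ)‖ ≤ 2 / δ := by
  obtain _ | m := m
  · simpa using div_nonneg zero_le_two hδ.le
  set g : ℕ → ℝ := fun n ↦ f (n + 1) - f n with hg
  have hsin (n) (hn : n ≤ m) : 2 * δ ≤ sin (π * g n) :=
    two_mul_le_sin_pi_mul hδ.le (hmem n (by omega))
  have hsin_pos (n) (hn : n ≤ m) : 0 < sin (π * g n) := by linarith [hsin n hn]
  have hcot (n) (hn : n ≤ m) : |cot (π * g n)| ≤ (2 * δ)⁻¹ :=
    (abs_cot_le_inv_sin (hsin_pos n hn)).trans (inv_anti₀ (by positivity) (hsin n hn))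
  have hIoo (n) (hn : n ≤ m) : π * g n ∈ Set.Ioo 0 π := by
    have := hmem n (by omega)
    constructor <;> nlinarith [pi_pos, this.1, this.2]
  have hcot_succ (n) (hn : n < m) : cot (π * g (n + 1)) ≤ cot (π * g n) :=
    cot_antitoneOn_Ioo (hIoo n hn.le) (hIoo (n + 1) hn) <| mul_le_mul_of_nonneg_left
      (hmono (Set.mem_Iio.2 (by omega)) (Set.mem_Iio.2 (by omega)) n.le_succ) pi_pos.le
  have hrec (n) (hn : n ≤ m) :
      (1 + cot (π * g n) * Complex.I) / 2 * (𝐞 (f n) - 𝐞 (f (n + 1))) = 𝐞 (f n) := by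
    have : (𝐞 (f (n + 1)) : ℂ) = 𝐞 (f n) * 𝐞 (g n) := by
      rw [← Circle.coe_mul, ← AddChar.map_add_eq_mul, hg, add_sub_cancel]
    rw [this]
    linear_combination (𝐞 (f n) : ℂ) *
      one_add_cot_mul_I_div_two_mul_one_sub_fourierChar (hsin_pos n hn).ne'
  refine (norm_sum_range_le_of_antitone (fun n ↦ (Circle.norm_coe _).le) hcot_succ hcot
    hrec).trans ?_
  have hδ' : δ ≤ 1 / 2 := by linarith [(hmem 0 m.succ_pos).1.trans (hmem 0 m.succ_pos).2]
  rw [le_div_iff₀ hδ, mul_inv_rev]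
  field_simp
  linarith

theorem sub_mul_le_sub_of_add_le {g : ℕ → ℝ} {N : ℕ} {l : ℝ}
    (hg : ∀ n, n + 1 < N → g n + l ≤ g (n + 1)) {p q : ℕ} (hpq : p ≤ q) (hq : q < N) :
    (q - p) * l ≤ g q - g p := by
  induction hpq with
  | refl => simp
  | step _ ih =>
    push_cast
    linarith [ih (by omega), hg _ hq]

theorem monotoneOn_Iio_of_add_le {g : ℕ → ℝ} {N : ℕ} {l : ℝ} (hl : 0 ≤ l)
    (hg : ∀ n, n + 1 < N → g n + l ≤ g (n + 1)) : MonotoneOn g (Set.Iio N) := by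
  intro p _ q hq hpq
  have : 0 ≤ ((q : ℝ) - p) * l := mul_nonneg (by simpa using hpq) hl
  linarith [sub_mul_le_sub_of_add_le hg hpq hq]

theorem card_filter_mem_Icc_le {g : ℕ → ℝ} {N : ℕ} {l : ℝ} (hl : 0 < l)
    (hg : ∀ n, n + 1 < N → g n + l ≤ g (n + 1)) {a b : ℝ} (hab : a ≤ b) :
    (#{n ∈ range N | g n ∈ Set.Icc a b} : ℝ) ≤ (b - a) / l + 1 := by
  obtain h | h := ({n ∈ range N | g n ∈ Set.Icc a b}).eq_empty_or_nonempty
  · rw [h, card_empty, Nat.cast_zero]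
    have := sub_nonneg.2 hab
    positivity
  have hmin := mem_filter.1 (min'_mem _ h)
  have hmax := mem_filter.1 (max'_mem _ h)
  have hle := min'_le_max' _ h
  set p := min' _ h
  set q := max' _ h
  have hcard : #{n ∈ range N | g n ∈ Set.Icc a b} ≤ q + 1 - p :=
    (card_le_card fun n hn ↦ mem_Icc.2 ⟨min'_le _ _ hn, le_max' _ _ hn⟩).trans_eq
      (Nat.card_Icc p q)
  calc (#{n ∈ range N | g n ∈ Set.Icc a b} : ℝ) ≤ (q - p) + 1 := by
        rw [← Nat.cast_sub hle]; exact_mod_cast (by omega)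
    _ ≤ (b - a) / l + 1 := by
        rw [add_le_add_iff_right, le_div_iff₀ hl]
        linarith [sub_mul_le_sub_of_add_le hg hle (mem_range.1 hmax.1), hmin.2.1, hmax.2.2]

theorem exists_filter_mem_Icc_eq_Ico {g : ℕ → ℝ} {N : ℕ} (hg : MonotoneOn g (Set.Iio N))
    (a b : ℝ) : ∃ p q, q ≤ N ∧ {n ∈ range N | g n ∈ Set.Icc a b} = Ico p q := by
  obtain h | h := ({n ∈ range N | g n ∈ Set.Icc a b}).eq_empty_or_nonempty
  · exact ⟨0, 0, N.zero_le, by simpa using h⟩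
  have hmin := mem_filter.1 (min'_mem _ h)
  have hmax := mem_filter.1 (max'_mem _ h)
  refine ⟨min' _ h, max' _ h + 1, mem_range.1 hmax.1, Subset.antisymm (fun n hn ↦ ?_)
    fun n hn ↦ ?_⟩
  · exact mem_Ico.2 ⟨min'_le _ _ hn, Nat.lt_succ_of_le (le_max' _ _ hn)⟩
  · obtain ⟨hpn, hnq⟩ := mem_Ico.1 hn
    have hnq := Nat.le_of_lt_succ hnq
    have hnN : n < N := hnq.trans_lt (mem_range.1 hmax.1)
    exact mem_filter.2 ⟨mem_range.2 hnN, hmin.2.1.trans (hg (mem_range.1 hmin.1) hnN hpn),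
      (hg hnN (mem_range.1 hmax.1) hnq).trans hmax.2.2⟩

theorem norm_sum_fourierChar_le_card {ι : Type*} (s : Finset ι) (f : ι → ℝ) :
    ‖∑ n ∈ s, (𝐞 (f n) : ℂ)‖ ≤ #s :=
  (norm_sum_le_of_le s fun _ _ ↦ (Circle.norm_coe _).le).trans_eq (by simp)

theorem fourierChar_intCast (k : ℤ) : 𝐞 (k : ℝ) = 1 := by
  rw [fourierChar_apply', mul_comm, Circle.exp_int_mul_two_pi]

theorem norm_sum_filter_fourierChar_le {f : ℕ → ℝ} {N : ℕ} {δ : ℝ} (hδ : 0 < δ)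
    (hmono : MonotoneOn (fun n ↦ f (n + 1) - f n) (Set.Iio N)) (k : ℤ) :
    ‖∑ n ∈ range N with f (n + 1) - f n ∈ Set.Icc (k + δ) (k + 1 - δ), (𝐞 (f n) : ℂ)‖ ≤
      2 / δ := by
  obtain ⟨p, q, hqN, hpq⟩ := exists_filter_mem_Icc_eq_Ico hmono (k + δ) (k + 1 - δ)
  have hmem (n) (hn : n < q - p) :
      f (p + n + 1) - f (p + n) ∈ Set.Icc (k + δ) (k + 1 - δ) :=
    (mem_filter.1 (hpq ▸ mem_Ico.2 ⟨by omega, by omega⟩ : p + n ∈ filter _ _)).2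
  have hshift (n : ℕ) : (𝐞 (f (p + n)) : ℂ) = 𝐞 (f (p + n) - (k * n : ℤ)) := by
    rw [AddChar.map_sub_eq_div, fourierChar_intCast, div_one]
  rw [hpq, sum_Ico_eq_sum_range, sum_congr rfl fun n _ ↦ hshift n]
  refine norm_sum_fourierChar_le_of_monotoneOn hδ (fun i hi j hj hij ↦ ?_) fun n hn ↦ ?_
  · have := hmono (show p + i ∈ Set.Iio N by grind) (show p + j ∈ Set.Iio N by grind) (by omega)
    push_cast
    simp only [← add_assoc] at this ⊢
    linarith
  · have := hmem n hn
    push_cast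
    simp only [← add_assoc]
    constructor <;> linarith [this.1, this.2]

theorem norm_sum_filter_floor_fourierChar_le {f : ℕ → ℝ} {N : ℕ} {l : ℝ} (hl : 0 < l)
    (hl1 : l ≤ 1) (hf : ∀ n, n + 1 < N → f (n + 1) - f n + l ≤ f (n + 2) - f (n + 1)) (k : ℤ) :
    ‖∑ n ∈ range N with ⌊f (n + 1) - f n⌋ = k, (𝐞 (f n) : ℂ)‖ ≤ 6 / √l := by
  set g : ℕ → ℝ := fun n ↦ f (n + 1) - f n
  -- Slopes within `√l` of an integer are few; the others satisfy the Kusmin–Landau inequality.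
  have hδ : 0 < √l := sqrt_pos.2 hl
  set mid := {n ∈ range N | g n ∈ Set.Icc (k + √l) (k + 1 - √l)}
  set low := {n ∈ range N | g n ∈ Set.Icc (k : ℝ) (k + √l)}
  set high := {n ∈ range N | g n ∈ Set.Icc (k + 1 - √l) (k + 1)}
  set block := {n ∈ range N | ⌊g n⌋ = k}
  have hmid_sub : mid ⊆ block := fun n hn ↦ by
    obtain ⟨hnN, h⟩ := mem_filter.1 hn
    refine mem_filter.2 ⟨hnN, Int.floor_eq_iff.2 ?_⟩
    constructor <;> linarith [h.1, h.2]
  have hcover : block \ mid ⊆ low ∪ high := fun n hn ↦ by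
    obtain ⟨hn, hn'⟩ := mem_sdiff.1 hn
    obtain ⟨hnN, h⟩ := mem_filter.1 hn
    obtain ⟨h1, h2⟩ := Int.floor_eq_iff.1 h
    simp only [mid, low, high, mem_union, mem_filter, hnN, true_and, Set.mem_Icc, not_and] at hn' ⊢
    grind
  have hedge : (#(block \ mid) : ℝ) ≤ 2 * (√l / l + 1) := by
    have h1 := card_filter_mem_Icc_le hl hf (a := k) (b := k + √l) (by linarith)
    have h2 := card_filter_mem_Icc_le hl hf (a := k + 1 - √l) (b := k + 1) (by linarith)
    have h3 : (#(block \ mid) : ℝ) ≤ #low + #high := mod_cast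
      (card_le_card hcover).trans (card_union_le _ _)
    rw [add_sub_cancel_left] at h1
    rw [sub_sub_cancel] at h2
    linarith
  have hone : 1 ≤ 1 / √l := by rw [le_div_iff₀ hδ, one_mul]; exact sqrt_le_one.2 hl1
  calc ‖∑ n ∈ block, (𝐞 (f n) : ℂ)‖
      ≤ ‖∑ n ∈ block \ mid, (𝐞 (f n) : ℂ)‖ + ‖∑ n ∈ mid, (𝐞 (f n) : ℂ)‖ := by
        rw [← sum_sdiff hmid_sub]; exact norm_add_le _ _
    _ ≤ 2 * (√l / l + 1) + 2 / √l := by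
        gcongr
        · exact (norm_sum_fourierChar_le_card _ _).trans hedge
        · exact norm_sum_filter_fourierChar_le hδ (monotoneOn_Iio_of_add_le hl.le hf) k
    _ ≤ 6 / √l := by
        rw [sqrt_div_self', show (6 : ℝ) / √l = 6 * (1 / √l) by ring,
          show (2 : ℝ) / √l = 2 * (1 / √l) by ring]
        linarith

/-- Van der Corput's second-derivative test. -/
theorem norm_sum_fourierChar_le_of_add_le {f : ℕ → ℝ} {N : ℕ} {l L : ℝ} (hl : 0 < l)
    (hl1 : l ≤ 1) (hf : ∀ n, n + 1 < N → f (n + 1) - f n + l ≤ f (n + 2) - f (n + 1))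
    (hL : 0 ≤ L) (hfL : ∀ n < N, f (n + 1) - f n ≤ f 1 - f 0 + L) :
    ‖∑ n ∈ range N, (𝐞 (f n) : ℂ)‖ ≤ 6 * (L + 2) / √l := by
  set g : ℕ → ℝ := fun n ↦ f (n + 1) - f n
  set T := Icc ⌊g 0⌋ ⌊g 0 + L⌋
  have hmaps : ∀ n ∈ range N, ⌊g n⌋ ∈ T := fun n hn ↦ by
    have hnN := mem_range.1 hn
    have := monotoneOn_Iio_of_add_le hl.le hf (n.zero_le.trans_lt hnN) hnN n.zero_le
    exact mem_Icc.2 ⟨Int.floor_mono this, Int.floor_mono (hfL n hnN)⟩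
  have hcard : (#T : ℝ) ≤ L + 2 := by
    have h1 := Int.floor_le (g 0 + L)
    have h2 := Int.lt_floor_add_one (g 0)
    have h3 : ⌊g 0⌋ ≤ ⌊g 0 + L⌋ := Int.floor_mono (by linarith)
    have h4 : (#T : ℤ) = ⌊g 0 + L⌋ + 1 - ⌊g 0⌋ := Int.card_Icc_of_le _ _ (by omega)
    have h5 : (#T : ℝ) = ⌊g 0 + L⌋ + 1 - ⌊g 0⌋ := mod_cast h4
    linarith
  calc _ = ‖∑ k ∈ T, ∑ n ∈ range N with ⌊g n⌋ = k, (𝐞 (f n) : ℂ)‖ := by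
        rw [sum_fiberwise_of_maps_to hmaps]
    _ ≤ ∑ k ∈ T, 6 / √l :=
        norm_sum_le_of_le _ fun k _ ↦ norm_sum_filter_floor_fourierChar_le hl hl1 hf k
    _ = #T * (6 / √l) := by rw [sum_const, nsmul_eq_mul]
    _ ≤ 6 * (L + 2) / √l := by rw [mul_div_right_comm, mul_comm]; gcongr

theorem natCast_le_div_of_add_le {g : ℕ → ℝ} {N : ℕ} {l L : ℝ} (hl : 0 < l) (hl1 : l ≤ 1)
    (hg : ∀ n, n + 1 < N → g n + l ≤ g (n + 1)) (hL : 0 ≤ L) (hgL : ∀ n < N, g n ≤ g 0 + L) :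
    (N : ℝ) ≤ (L + 1) / l := by
  obtain _ | N := N
  · simpa using by positivity
  have := sub_mul_le_sub_of_add_le hg N.zero_le N.lt_succ_self
  have := hgL N N.lt_succ_self
  rw [le_div_iff₀ hl]
  push_cast at *
  linarith

theorem norm_sum_fourierChar_mul_le_of_add_le {f : ℕ → ℝ} {N : ℕ} {l L : ℝ} (hl : 0 < l)
    (hl1 : l ≤ 1) (hf : ∀ n, n + 1 < N → f (n + 1) - f n + l ≤ f (n + 2) - f (n + 1))
    (hL : 0 ≤ L) (hfL : ∀ n < N, f (n + 1) - f n ≤ f 1 - f 0 + L) {h : ℝ} (hh : 1 ≤ h) :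
    ‖∑ n ∈ range N, (𝐞 (h * f n) : ℂ)‖ ≤ 6 * (L + 2) / √l * √h := by
  have hsl : 0 < √l := sqrt_pos.2 hl
  obtain hhl | hhl := le_total (h * l) 1
  · refine (norm_sum_fourierChar_le_of_add_le (f := fun n ↦ h * f n) (L := h * L) (by positivity)
      hhl (fun n hn ↦ ?_) (by positivity) fun n hn ↦ ?_).trans ?_
    · linarith [mul_le_mul_of_nonneg_left (hf n hn) (zero_le_one.trans hh)]
    · linarith [mul_le_mul_of_nonneg_left (hfL n hn) (zero_le_one.trans hh)]
    · rw [sqrt_mul (by positivity), div_mul_eq_mul_div, div_le_div_iff₀ (by positivity) hsl]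
      have : h * L + 2 ≤ (L + 2) * (√h * √h) := by rw [mul_self_sqrt (by positivity)]; linarith
      nlinarith
  · -- Here the trivial bound by the number of terms is already good enough.
    have hinv : 1 / l ≤ √h / √l := by
      rw [div_le_div_iff₀ hl hsl, one_mul]
      calc √l ≤ √l * (√h * √l) := le_mul_of_one_le_right hsl.le (by
            rw [← sqrt_mul (by positivity)]; exact one_le_sqrt.2 hhl)
        _ = √h * l := by rw [mul_left_comm, mul_self_sqrt hl.le]
    calc _ ≤ (N : ℝ) := (norm_sum_fourierChar_le_card _ _).trans_eq (by rw [card_range])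
      _ ≤ (L + 1) * (1 / l) := by
          rw [mul_one_div]; exact natCast_le_div_of_add_le hl hl1 hf hL hfL
      _ ≤ (6 * (L + 2)) * (√h / √l) := by gcongr; linarith
      _ = 6 * (L + 2) / √l * √h := by ring

theorem norm_sum_fourierChar_neg {ι : Type*} (s : Finset ι) (y : ι → ℝ) :
    ‖∑ i ∈ s, (𝐞 (-y i) : ℂ)‖ = ‖∑ i ∈ s, (𝐞 (y i) : ℂ)‖ := by
  simp_rw [AddChar.map_neg_eq_inv, Circle.coe_inv_eq_conj]
  rw [← map_sum, RCLike.norm_conj]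

theorem norm_sum_fourierChar_mul_le_of_le_sub {f : ℕ → ℝ} {N : ℕ} {l L : ℝ} (hl : 0 < l)
    (hl1 : l ≤ 1) (hf : ∀ n, n + 1 < N → f (n + 2) - f (n + 1) ≤ f (n + 1) - f n - l)
    (hL : 0 ≤ L) (hfL : ∀ n < N, f 1 - f 0 ≤ f (n + 1) - f n + L) {h : ℝ} (hh : 1 ≤ h) :
    ‖∑ n ∈ range N, (𝐞 (h * f n) : ℂ)‖ ≤ 6 * (L + 2) / √l * √h := by
  rw [← norm_sum_fourierChar_neg]
  simp_rw [← mul_neg]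
  exact norm_sum_fourierChar_mul_le_of_add_le (f := fun n ↦ -f n) hl hl1
    (fun n hn ↦ by linarith [hf n hn]) hL (fun n hn ↦ by linarith [hfL n hn]) hh

end ExponentialSums

section Sawtooth

open Finset FourierTransform

theorem mul_half_sub_fract_le (y θ : ℝ) :
    θ * (1 / 2 - Int.fract y) ≤
      θ ^ 2 / 2 - (bernoulliFun 2 (Int.fract (y + θ)) - bernoulliFun 2 (Int.fract y)) / 2 := by
  -- `z ↦ ⌊z⌋ * z - ⌊z⌋ * (⌊z⌋ + 1) / 2` is convex with subgradient `⌊z⌋`.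
  have hconvex : 0 ≤ ((⌊y + θ⌋ : ℝ) - ⌊y⌋) * (y + θ - (⌊y + θ⌋ + ⌊y⌋ + 1) / 2) := by
    have h1 := Int.floor_le (y + θ)
    have h2 := Int.lt_floor_add_one (y + θ)
    obtain h | h | h := lt_trichotomy ⌊y + θ⌋ ⌊y⌋
    · have : (⌊y + θ⌋ : ℝ) + 1 ≤ ⌊y⌋ := mod_cast h
      exact mul_nonneg_of_nonpos_of_nonpos (by linarith) (by linarith)
    · simp [h]
    · have : (⌊y⌋ : ℝ) + 1 ≤ ⌊y + θ⌋ := mod_cast h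
      exact mul_nonneg (by linarith) (by linarith)
  rw [bernoulliFun_two, bernoulliFun_two, Int.fract, Int.fract]
  linarith

theorem hasSum_cos_bernoulliFun_two_fract (y : ℝ) :
    HasSum (fun h : ℕ ↦ 1 / (h : ℝ) ^ 2 * cos (2 * π * h * y))
      (π ^ 2 * bernoulliFun 2 (Int.fract y)) := by
  convert hasSum_one_div_nat_pow_mul_cos one_ne_zero
    ⟨Int.fract_nonneg y, (Int.fract_lt_one y).le⟩ using 1
  · ext h
    rw [mul_one, ← Int.self_sub_floor, mul_sub,
      show 2 * π * h * ⌊y⌋ = ((h * ⌊y⌋ : ℤ) : ℝ) * (2 * π) by push_cast; ring,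
      cos_sub_int_mul_two_pi]
  · rw [bernoulliFun, mul_one, Nat.factorial_two]
    push_cast
    ring

theorem inv_sqrt_le_two_mul_sqrt_sub_sqrt {t : ℝ} (ht : 0 ≤ t) :
    1 / √(t + 1) ≤ 2 * (√(t + 1) - √t) := by
  have hpos : 0 < √(t + 1) := sqrt_pos.2 (by linarith)
  rw [div_le_iff₀ hpos]
  nlinarith [sq_nonneg (√(t + 1) - √t), sq_sqrt ht, sq_sqrt (show 0 ≤ t + 1 by linarith)]

theorem sqrt_div_sq_le_two_mul_inv_sqrt_sub_inv_sqrt {t : ℝ} (ht : 0 < t) :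
    √(t + 1) / (t + 1) ^ 2 ≤ 2 * (1 / √t - 1 / √(t + 1)) := by
  have hle : √t ≤ √(t + 1) := sqrt_le_sqrt (by linarith)
  calc √(t + 1) / (t + 1) ^ 2 = 1 / √(t + 1) * (1 / (√(t + 1) * √(t + 1))) := by
        rw [mul_self_sqrt (by linarith), sq, ← div_div, sqrt_div_self]
        ring
    _ ≤ 2 * (√(t + 1) - √t) * (1 / (√t * √(t + 1))) := by
        gcongr
        exact inv_sqrt_le_two_mul_sqrt_sub_sqrt ht.le
    _ = 2 * (1 / √t - 1 / √(t + 1)) := by field_simp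

theorem sum_range_min_mul_sqrt_div_sq_le_sqrt (H n : ℕ) :
    ∑ h ∈ range (n + 1), min 1 ((h : ℝ) / H) * (√h / h ^ 2) ≤ 2 / H * √n := by
  induction n with
  | zero => simp
  | succ n ih =>
    rw [sum_range_succ]
    have : min 1 (((n + 1 : ℕ) : ℝ) / H) * (√(n + 1 : ℕ) / (n + 1 : ℕ) ^ 2) ≤
        1 / H * (2 * (√(n + 1 : ℕ) - √n)) := by
      calc _ ≤ ((n + 1 : ℕ) : ℝ) / H * (√(n + 1 : ℕ) / (n + 1 : ℕ) ^ 2) := by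
            gcongr; exact min_le_right _ _
        _ = 1 / H * (√(n + 1 : ℕ) / (n + 1 : ℕ)) := by field_simp
        _ ≤ 1 / H * (2 * (√(n + 1 : ℕ) - √n)) := by
            rw [sqrt_div_self']
            push_cast
            gcongr
            exact inv_sqrt_le_two_mul_sqrt_sub_sqrt n.cast_nonneg
    refine (add_le_add ih this).trans_eq ?_
    ring

theorem sum_range_min_mul_sqrt_div_sq_le {H : ℕ} (hH : 0 < H) (n : ℕ) :
    ∑ h ∈ range n, min 1 ((h : ℝ) / H) * (√h / h ^ 2) ≤ 4 / √H := by
  have hhigh (n : ℕ) (hn : H ≤ n) :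
      ∑ h ∈ range (n + 1), min 1 ((h : ℝ) / H) * (√h / h ^ 2) ≤ 4 / √H - 2 / √n := by
    induction n, hn using Nat.le_induction with
    | base =>
      refine (sum_range_min_mul_sqrt_div_sq_le_sqrt H H).trans_eq ?_
      rw [div_mul_eq_mul_div, mul_div_assoc, sqrt_div_self']
      ring
    | succ n hn ih =>
      rw [sum_range_succ]
      have : min 1 (((n + 1 : ℕ) : ℝ) / H) * (√(n + 1 : ℕ) / (n + 1 : ℕ) ^ 2) ≤
          2 * (1 / √n - 1 / √(n + 1 : ℕ)) := by
        refine (mul_le_of_le_one_left (by positivity) (min_le_left _ _)).trans ?_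
        exact_mod_cast sqrt_div_sq_le_two_mul_inv_sqrt_sub_inv_sqrt
          (t := (n : ℝ)) (mod_cast hH.trans_le hn)
      refine (add_le_add ih this).trans_eq ?_
      ring
  calc _ ≤ ∑ h ∈ range (max n H + 1), min 1 ((h : ℝ) / H) * (√h / h ^ 2) :=
        sum_le_sum_of_subset_of_nonneg (range_subset_range.2 (by omega)) fun _ _ _ ↦ by positivity
    _ ≤ 4 / √H - 2 / √(max n H : ℕ) := hhigh _ (le_max_right _ _)
    _ ≤ 4 / √H := sub_le_self _ (by positivity)

theorem norm_fourierChar_sub_one_le (t : ℝ) : ‖(𝐞 t : ℂ) - 1‖ ≤ 2 * π * min 1 |t| := by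
  rw [mul_min_of_nonneg _ _ two_pi_pos.le]
  refine le_min ((norm_sub_le _ _).trans ?_) ?_
  · rw [Circle.norm_coe, norm_one]
    linarith [pi_gt_three]
  · rw [fourierChar_apply, mul_comm _ Complex.I]
    refine norm_exp_I_mul_ofReal_sub_one_le.trans_eq ?_
    rw [norm_mul, norm_of_nonneg two_pi_pos.le, norm_eq_abs]

theorem sum_cos_add_sub_sum_cos {ι : Type*} (s : Finset ι) (y : ι → ℝ) (θ h : ℝ) :
    ∑ i ∈ s, (cos (2 * π * h * (y i + θ)) - cos (2 * π * h * y i)) =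
      ((𝐞 (h * θ) - 1) * ∑ i ∈ s, (𝐞 (h * y i) : ℂ)).re := by
  have hre (t : ℝ) : (𝐞 t : ℂ).re = cos (2 * π * t) := by
    rw [fourierChar_apply, Complex.exp_ofReal_mul_I_re]
  rw [mul_sum, Complex.re_sum]
  refine sum_congr rfl fun i _ ↦ ?_
  rw [sub_one_mul, ← Circle.coe_mul, ← AddChar.map_add_eq_mul, Complex.sub_re, hre, hre]
  congr 2 <;> ring

theorem abs_sum_bernoulliFun_two_fract_sub_le {ι : Type*} {s : Finset ι} {y : ι → ℝ} {K : ℝ}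
    (hK : ∀ h : ℕ, h ≠ 0 → ‖∑ i ∈ s, (𝐞 (h * y i) : ℂ)‖ ≤ K * √h) {H : ℕ} (hH : 0 < H)
    {θ : ℝ} (hθ : |θ| = 1 / H) :
    |∑ i ∈ s, (bernoulliFun 2 (Int.fract (y i + θ)) - bernoulliFun 2 (Int.fract (y i)))| ≤
      4 * K / √H := by
  set S := ∑ i ∈ s, (bernoulliFun 2 (Int.fract (y i + θ)) - bernoulliFun 2 (Int.fract (y i)))
  set d : ℕ → ℝ := fun h ↦
    1 / (h : ℝ) ^ 2 * ((𝐞 (h * θ) - 1) * ∑ i ∈ s, (𝐞 (h * y i) : ℂ)).re with hd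
  have hK0 : 0 ≤ K := by simpa using (norm_nonneg _).trans (hK 1 one_ne_zero)
  have hsum : HasSum d (π ^ 2 * S) := by
    simp only [hd, S, ← sum_cos_add_sub_sum_cos]
    simp only [mul_sum, mul_sub]
    exact hasSum_sum fun i _ ↦ (hasSum_cos_bernoulliFun_two_fract _).sub
      (hasSum_cos_bernoulliFun_two_fract _)
  have hterm (h : ℕ) : |d h| ≤ 2 * π * K * (min 1 ((h : ℝ) / H) * (√h / h ^ 2)) := by
    obtain rfl | hh := eq_or_ne h 0
    · simp [d]
    rw [hd, abs_mul, abs_of_nonneg (by positivity)]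
    calc _ ≤ 1 / (h : ℝ) ^ 2 * (2 * π * min 1 |h * θ| * (K * √h)) := by
          gcongr
          refine (Complex.abs_re_le_norm _).trans ?_
          rw [norm_mul]
          gcongr
          exacts [norm_fourierChar_sub_one_le _, hK h hh]
      _ = _ := by
          rw [abs_mul, hθ, Nat.abs_cast, mul_one_div]
          ring
  have hbound : |π ^ 2 * S| ≤ 2 * π * K * (4 / √H) := by
    refine le_of_tendsto hsum.tendsto_sum_nat.abs (.of_forall fun n ↦ ?_)
    refine (abs_sum_le_sum_abs _ _).trans ((sum_le_sum fun h _ ↦ hterm h).trans ?_)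
    rw [← mul_sum]
    gcongr
    exact sum_range_min_mul_sqrt_div_sq_le hH n
  rw [abs_mul, abs_of_nonneg (sq_nonneg π)] at hbound
  have hS : π * |S| ≤ 2 * (4 * K / √H) := by
    refine le_of_mul_le_mul_left (le_trans (le_of_eq ?_) (hbound.trans_eq ?_)) pi_pos <;> ring
  nlinarith [pi_gt_three, abs_nonneg S]

theorem abs_sum_half_sub_fract_le {ι : Type*} {s : Finset ι} {y : ι → ℝ} {K : ℝ}
    (hK : ∀ h : ℕ, h ≠ 0 → ‖∑ i ∈ s, (𝐞 (h * y i) : ℂ)‖ ≤ K * √h) {H : ℕ} (hH : 0 < H) :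
    |∑ i ∈ s, (1 / 2 - Int.fract (y i))| ≤ #s / (2 * H) + 2 * K * √H := by
  have hH' : (0 : ℝ) < H := mod_cast hH
  have key (θ : ℝ) (hθ : |θ| = 1 / H) :
      θ * ∑ i ∈ s, (1 / 2 - Int.fract (y i)) ≤ (#s / (2 * H) + 2 * K * √H) / H := by
    rw [mul_sum]
    refine (sum_le_sum fun i _ ↦ mul_half_sub_fract_le (y i) θ).trans ?_
    rw [sum_sub_distrib, sum_const, nsmul_eq_mul, ← sum_div, ← sq_abs θ, hθ, add_div,
      sub_eq_add_neg, mul_div_assoc _ _ (H : ℝ), sqrt_div_self']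
    refine add_le_add (le_of_eq ?_) ?_
    · field_simp
    · have := (abs_le.1 (abs_sum_bernoulliFun_two_fract_sub_le hK hH hθ)).1
      rw [mul_one_div]
      linarith [show 4 * K / √H = 2 * (2 * K / √H) by ring]
  refine abs_le'.2 ⟨?_, ?_⟩
  · have := key (1 / H) (abs_of_pos (by positivity))
    rwa [one_div_mul_eq_div, div_le_div_iff_of_pos_right hH'] at this
  · have := key (-(1 / H)) (by rw [abs_neg, abs_of_pos (by positivity)])
    rwa [neg_mul, one_div_mul_eq_div, ← neg_div, div_le_div_iff_of_pos_right hH'] at this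

theorem abs_sum_half_sub_fract_le_rpow {f : ℕ → ℝ} {N : ℕ} {l L : ℝ} (hl : 0 < l) (hl1 : l ≤ 1)
    (hf : ∀ n, n + 1 < N → f (n + 2) - f (n + 1) ≤ f (n + 1) - f n - l)
    (hL : 0 ≤ L) (hfL : ∀ n < N, f 1 - f 0 ≤ f (n + 1) - f n + L) :
    |∑ n ∈ range N, (1 / 2 - Int.fract (f n))| ≤ 25 * (L + 2) * l ^ (-(2 / 3 : ℝ)) := by
  set r := l ^ (-(1 / 3 : ℝ)) with hr
  have hr1 : 1 ≤ r := one_le_rpow_of_pos_of_le_one_of_nonpos hl hl1 (by norm_num)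
  have hr2 : r ^ 2 = l ^ (-(2 / 3 : ℝ)) := by
    rw [hr, ← rpow_natCast, ← rpow_mul hl.le]; norm_num
  have hr3 : 1 / l = r ^ 3 := by
    rw [hr, ← rpow_natCast, ← rpow_mul hl.le, one_div, ← rpow_neg_one]; norm_num
  have hsr : 1 / √l = r * √r := by
    rw [← sqrt_one, ← sqrt_div zero_le_one, hr3, pow_succ, sqrt_mul (by positivity),
      sqrt_sq (by positivity)]
  have hN : (N : ℝ) ≤ (L + 1) / l :=
    natCast_le_div_of_add_le (g := fun n ↦ -(f (n + 1) - f n)) hl hl1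
      (fun n hn ↦ by linarith [hf n hn]) hL fun n hn ↦ by linarith [hfL n hn]
  have hK (h : ℕ) (hh : h ≠ 0) :
      ‖∑ n ∈ range N, (𝐞 (h * f n) : ℂ)‖ ≤ 6 * (L + 2) / √l * √h :=
    norm_sum_fourierChar_mul_le_of_le_sub hl hl1 hf hL hfL
      (mod_cast Nat.one_le_iff_ne_zero.2 hh)
  have hH : 0 < ⌈r⌉₊ := Nat.ceil_pos.2 (by positivity)
  have hrH : r ≤ ⌈r⌉₊ := Nat.le_ceil r
  have hHr : √⌈r⌉₊ ≤ 2 * √r := by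
    rw [sqrt_le_left (by positivity), mul_pow, sq_sqrt (by positivity)]
    linarith [Nat.ceil_lt_add_one (zero_le_one.trans hr1)]
  refine (abs_sum_half_sub_fract_le hK hH).trans ?_
  rw [card_range]
  calc (N : ℝ) / (2 * ⌈r⌉₊) + 2 * (6 * (L + 2) / √l) * √⌈r⌉₊
      ≤ (L + 2) * r ^ 3 / (2 * r) + 2 * (6 * (L + 2) * (r * √r)) * (2 * √r) := by
        rw [← hsr, ← hr3, mul_one_div, mul_one_div]
        gcongr
        exact hN.trans (by gcongr; linarith)
    _ = (L + 2) * r ^ 2 * (1 / 2) + 24 * (L + 2) * r * (√r * √r) := by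
        field_simp; ring
    _ ≤ 25 * (L + 2) * l ^ (-(2 / 3 : ℝ)) := by
        rw [mul_self_sqrt (by positivity), ← hr2]
        nlinarith [mul_nonneg (show 0 ≤ L + 2 by linarith) (sq_nonneg r)]

end Sawtooth

section Trapezoid

open Set

theorem sub_le_sub_of_hasDerivAt_le {f f' g g' : ℝ → ℝ} {a b : ℝ} (hab : a ≤ b)
    (hf : ∀ t ∈ Icc a b, HasDerivAt f (f' t) t) (hg : ∀ t ∈ Icc a b, HasDerivAt g (g' t) t)
    (hle : ∀ t ∈ Icc a b, f' t ≤ g' t) : f b - f a ≤ g b - g a := by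
  have hmono : MonotoneOn (g - f) (Icc a b) := by
    refine monotoneOn_of_hasDerivWithinAt_nonneg (f' := g' - f') (convex_Icc a b)
      (fun t ht ↦ ((hg t ht).sub (hf t ht)).continuousAt.continuousWithinAt) (fun t ht ↦ ?_)
      fun t ht ↦ sub_nonneg.2 (hle t (interior_subset ht))
    exact ((hg t (interior_subset ht)).sub (hf t (interior_subset ht))).hasDerivWithinAt
  have := hmono (left_mem_Icc.2 hab) (right_mem_Icc.2 hab) hab
  simp only [Pi.sub_apply] at this
  linarith

theorem sub_le_mul_of_hasDerivAt_le {f f' : ℝ → ℝ} {a b c : ℝ} (hab : a ≤ b)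
    (hf : ∀ t ∈ Icc a b, HasDerivAt f (f' t) t) (hle : ∀ t ∈ Icc a b, f' t ≤ c) :
    f b - f a ≤ (b - a) * c := by
  refine (sub_le_sub_of_hasDerivAt_le hab hf (fun t _ ↦ hasDerivAt_mul_const c) hle).trans_eq ?_
  ring

theorem sub_le_of_hasDerivAt_hasDerivAt_le {F f f' : ℝ → ℝ} {a b c : ℝ} (hab : a ≤ b)
    (hF : ∀ t ∈ Icc a b, HasDerivAt F (f t) t) (hf : ∀ t ∈ Icc a b, HasDerivAt f (f' t) t)
    (hle : ∀ t ∈ Icc a b, f' t ≤ c) :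
    F b - F a ≤ (b - a) * f a + (b - a) ^ 2 / 2 * c := by
  have hquad (t : ℝ) :
      HasDerivAt (fun t ↦ t * f a + (t - a) ^ 2 / 2 * c) (f a + (t - a) * c) t := by
    refine ((hasDerivAt_mul_const (f a)).fun_add
      (((((hasDerivAt_id' t).sub_const a).fun_pow 2).div_const 2).mul_const c)).congr_deriv ?_
    simp
  refine (sub_le_sub_of_hasDerivAt_le hab hF (fun t _ ↦ hquad t) fun t ht ↦ ?_).trans_eq ?_
  · have hsub : Icc a t ⊆ Icc a b := Icc_subset_Icc_right ht.2
    linarith [sub_le_mul_of_hasDerivAt_le ht.1 (fun u hu ↦ hf u (hsub hu))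
      fun u hu ↦ hle u (hsub hu)]
  · ring

theorem abs_trapezoid_sub_le {F f f' : ℝ → ℝ} {a b m M : ℝ} (hab : a ≤ b)
    (hF : ∀ t ∈ Icc a b, HasDerivAt F (f t) t) (hf : ∀ t ∈ Icc a b, HasDerivAt f (f' t) t)
    (hf' : ∀ t ∈ Icc a b, f' t ∈ Icc m M) :
    |(b - a) * (f a + f b) / 2 - (F b - F a)| ≤ (b - a) ^ 2 / 2 * (M - m) := by
  have hf_le := sub_le_mul_of_hasDerivAt_le hab hf fun t ht ↦ (hf' t ht).2
  have hf_ge := sub_le_mul_of_hasDerivAt_le hab (fun t ht ↦ (hf t ht).fun_neg)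
    fun t ht ↦ neg_le_neg (hf' t ht).1
  have hF_le := sub_le_of_hasDerivAt_hasDerivAt_le hab hF hf fun t ht ↦ (hf' t ht).2
  have hF_ge := sub_le_of_hasDerivAt_hasDerivAt_le hab (fun t ht ↦ (hF t ht).fun_neg)
    (fun t ht ↦ (hf t ht).fun_neg) fun t ht ↦ neg_le_neg (hf' t ht).1
  rw [abs_le]
  constructor <;> nlinarith

theorem abs_sum_range_sub_le_of_antitoneOn {F f f' : ℝ → ℝ} {N : ℕ}
    (hF : ∀ t ∈ Icc (0 : ℝ) N, HasDerivAt F (f t) t)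
    (hf : ∀ t ∈ Icc (0 : ℝ) N, HasDerivAt f (f' t) t) (hf' : AntitoneOn f' (Icc 0 N)) :
    |∑ n ∈ Finset.range N, f n - (F N - F 0) - (f 0 - f N) / 2| ≤ (f' 0 - f' N) / 2 := by
  have hcell (n : ℕ) (hn : n ∈ Finset.range N) :
      |(f n + f (n + 1 : ℕ)) / 2 - (F (n + 1 : ℕ) - F n)| ≤ (f' n - f' (n + 1 : ℕ)) / 2 := by
    have hle : (n : ℝ) ≤ (n + 1 : ℕ) := mod_cast n.le_succ
    have hsub : Icc (n : ℝ) (n + 1 : ℕ) ⊆ Icc 0 N :=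
      Icc_subset_Icc n.cast_nonneg (mod_cast Finset.mem_range.1 hn)
    have := abs_trapezoid_sub_le hle (fun t ht ↦ hF t (hsub ht)) (fun t ht ↦ hf t (hsub ht))
      fun t ht ↦ ⟨hf' (hsub ht) (hsub (right_mem_Icc.2 hle)) ht.2,
        hf' (hsub (left_mem_Icc.2 hle)) (hsub ht) ht.1⟩
    rw [show ((n + 1 : ℕ) : ℝ) - n = 1 by push_cast; ring, one_mul, one_pow,
      one_div_mul_eq_div] at this
    exact this
  have hsum : ∑ n ∈ Finset.range N, f n - (F N - F 0) - (f 0 - f N) / 2 =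
      ∑ n ∈ Finset.range N, ((f n + f (n + 1 : ℕ)) / 2 - (F (n + 1 : ℕ) - F n)) := by
    have h1 := Finset.sum_range_sub (fun n : ℕ ↦ F n) N
    have h2 := Finset.sum_range_sub (fun n : ℕ ↦ f n) N
    simp only [Nat.cast_zero] at h1 h2
    rw [← h1, ← neg_sub (f N), ← h2, neg_div, Finset.sum_div, sub_neg_eq_add,
      ← Finset.sum_sub_distrib, ← Finset.sum_add_distrib]
    exact Finset.sum_congr rfl fun n _ ↦ by ring
  rw [hsum]
  refine (Finset.abs_sum_le_sum_abs _ _).trans ((Finset.sum_le_sum hcell).trans_eq ?_)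
  rw [← Finset.sum_div, Finset.sum_range_sub' (fun n : ℕ ↦ f' n), Nat.cast_zero]

end Trapezoid

section QuarterDisk

open Set

/-- `octantHeight x t` is the vertical distance from the diagonal point `(t, t)` up to the circle
of radius `√x`, the integrand for the octant `0 ≤ t ≤ u` of the disk. -/
noncomputable def octantHeight (x t : ℝ) : ℝ := √(x - t ^ 2) - t

/-- `octantArea x t` is the area of the part of the octant `0 ≤ s ≤ u` of the disk of radius `√x`
with abscissa `s ≤ t`, in the closed form valid for `t ^ 2 < x`. -/
noncomputable def octantArea (x t : ℝ) : ℝ :=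
  (t * √(x - t ^ 2) + x * arcsin (t / √x)) / 2 - t ^ 2 / 2

variable {x t : ℝ}

theorem hasDerivAt_sqrt_sub_sq (h : t ^ 2 < x) :
    HasDerivAt (fun u ↦ √(x - u ^ 2)) (-(t / √(x - t ^ 2))) t := by
  refine (((hasDerivAt_pow 2 t).const_sub x).sqrt (sub_pos.2 h).ne').congr_deriv ?_
  push_cast
  ring

theorem hasDerivAt_octantHeight (h : t ^ 2 < x) :
    HasDerivAt (octantHeight x) (-(t / √(x - t ^ 2)) - 1) t :=
  (hasDerivAt_sqrt_sub_sq h).sub (hasDerivAt_id t)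

theorem hasDerivAt_octantArea (h : t ^ 2 < x) :
    HasDerivAt (octantArea x) (octantHeight x t) t := by
  have hx : 0 < x := (sq_nonneg t).trans_lt h
  have hs : 0 < √(x - t ^ 2) := sqrt_pos.2 (sub_pos.2 h)
  have hlt : |t / √x| < 1 := by
    rw [abs_div, abs_of_pos (sqrt_pos.2 hx), div_lt_one (sqrt_pos.2 hx)]
    exact lt_sqrt_of_sq_lt (by rwa [sq_abs])
  have harcsin : HasDerivAt (fun u ↦ arcsin (u / √x)) (1 / √(x - t ^ 2)) t := by
    refine ((hasDerivAt_arcsin (abs_lt.1 hlt).1.ne' (abs_lt.1 hlt).2.ne).comp t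
      ((hasDerivAt_id' t).div_const √x)).congr_deriv ?_
    rw [div_pow, sq_sqrt hx.le, one_sub_div hx.ne', sqrt_div' _ hx.le]
    field_simp
  refine (((((hasDerivAt_id' t).fun_mul (hasDerivAt_sqrt_sub_sq h)).fun_add
    (harcsin.const_mul x)).div_const 2).fun_sub ((hasDerivAt_pow 2 t).div_const 2)).congr_deriv ?_
  have hsq := sq_sqrt (sub_pos.2 h).le
  rw [octantHeight]
  push_cast
  field_simp
  linear_combination -hsq

theorem octantArea_zero : octantArea x 0 = 0 := by
  simp [octantArea]

theorem octantArea_sqrt_half (hx : 0 < x) : octantArea x √(x / 2) = π * x / 8 := by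
  have harcsin : arcsin (√(x / 2) / √x) = π / 4 := by
    rw [← sqrt_div' _ hx.le, div_div_cancel_left' hx.ne', sqrt_inv]
    refine arcsin_eq_of_sin_eq ?_ ⟨by linarith [pi_pos], by linarith [pi_pos]⟩
    rw [sin_pi_div_four, sqrt_div_self', one_div]
  rw [octantArea, harcsin, sq_sqrt (by positivity), sub_half, mul_self_sqrt (by positivity)]
  ring

theorem monotoneOn_div_sqrt_sub_sq {b : ℝ} (hb : b ^ 2 < x) :
    MonotoneOn (fun t ↦ t / √(x - t ^ 2)) (Icc 0 b) := by
  intro s hs t ht hst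
  have hs0 := hs.1
  have : 0 < √(x - t ^ 2) := sqrt_pos.2 (by nlinarith [ht.1, ht.2])
  dsimp only
  gcongr
  exact hs0.trans hst

theorem octantHeight_mem_Icc {M : ℕ} (hM : 2 * (M : ℝ) ^ 2 ≤ x) (hM' : x < 2 * (M + 1) ^ 2) :
    octantHeight x M ∈ Icc 0 2 := by
  refine ⟨sub_nonneg.2 (le_sqrt_of_sq_le (by linarith)), ?_⟩
  rw [octantHeight, sub_le_iff_le_add, sqrt_le_left (by positivity)]
  linarith

theorem sqrt_sub_sq_second_difference_le {n : ℝ} (hn : 0 ≤ n) (hnx : (n + 2) ^ 2 ≤ x) :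
    √(x - (n + 2) ^ 2) - √(x - (n + 1) ^ 2) ≤ √(x - (n + 1) ^ 2) - √(x - n ^ 2) - 1 / √x := by
  have hb : 1 ≤ √(x - (n + 1) ^ 2) := one_le_sqrt.2 (by linarith)
  have hbx : 1 / √x ≤ 1 / √(x - (n + 1) ^ 2) :=
    one_div_le_one_div_of_le (by positivity) (sqrt_le_sqrt (by linarith [sq_nonneg (n + 1)]))
  have ha2 := sq_sqrt (show 0 ≤ x - n ^ 2 by linarith)
  have hb2 := sq_sqrt (show 0 ≤ x - (n + 1) ^ 2 by linarith)
  have hc2 := sq_sqrt (show 0 ≤ x - (n + 2) ^ 2 by linarith)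
  set a := √(x - n ^ 2)
  set b := √(x - (n + 1) ^ 2)
  set c := √(x - (n + 2) ^ 2)
  suffices a + c ≤ 2 * b - 1 / b by linarith
  refine le_of_sq_le_sq ?_ ?_
  · calc (a + c) ^ 2 ≤ 2 * (a ^ 2 + c ^ 2) := add_sq_le
      _ = 4 * b ^ 2 - 4 := by linarith
      _ ≤ 4 * b ^ 2 - 4 + (1 / b) ^ 2 := le_add_of_nonneg_right (sq_nonneg _)
      _ = (2 * b - 1 / b) ^ 2 := by field_simp; ring
  · have : 1 / b ≤ 1 := (div_le_one (by positivity)).2 hb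
    linarith

theorem sqrt_sub_sq_sub_succ_le {n : ℝ} (hnx : 2 * (n + 1) ^ 2 ≤ x) :
    √(x - n ^ 2) ≤ √(x - (n + 1) ^ 2) + 1 := by
  have h : n + 1 ≤ √(x - (n + 1) ^ 2) := le_sqrt_of_sq_le (by linarith)
  rw [sqrt_le_left (by positivity), add_sq, sq_sqrt (by linarith [sq_nonneg (n + 1)])]
  linarith

theorem abs_sum_half_sub_fract_octantHeight_le {M : ℕ} (hx : 1 ≤ x) (hM : 2 * (M : ℝ) ^ 2 ≤ x) :
    |∑ n ∈ Finset.range M, (1 / 2 - Int.fract (octantHeight x n))| ≤ 75 * x ^ (1 / 3 : ℝ) := by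
  have hx0 : 0 < x := by linarith
  have hsucc (n : ℕ) (hn : n < M) : 2 * ((n : ℝ) + 1) ^ 2 ≤ x := by
    have : (n : ℝ) + 1 ≤ M := mod_cast hn
    nlinarith
  have hstep (n : ℕ) (hn : n + 1 < M) :
      octantHeight x (n + 2 : ℕ) - octantHeight x (n + 1 : ℕ) ≤
        octantHeight x (n + 1 : ℕ) - octantHeight x n - 1 / √x := by
    have hn' : ((n : ℝ) + 2) ^ 2 ≤ x := by
      have := hsucc (n + 1) hn
      push_cast at this
      nlinarith
    have := sqrt_sub_sq_second_difference_le n.cast_nonneg hn'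
    simp only [octantHeight]
    push_cast
    linarith
  have hslope (n : ℕ) (hn : n < M) : octantHeight x (1 : ℕ) - octantHeight x (0 : ℕ) ≤
      octantHeight x (n + 1 : ℕ) - octantHeight x n + 1 := by
    have h1 := sqrt_sub_sq_sub_succ_le (hsucc n hn)
    have h2 : √(x - 1 ^ 2) ≤ √(x - 0 ^ 2) := sqrt_le_sqrt (by norm_num)
    simp only [octantHeight]
    push_cast
    linarith
  refine (abs_sum_half_sub_fract_le_rpow (by positivity)
    ((div_le_one (by positivity)).2 (one_le_sqrt.2 hx)) hstep zero_le_one hslope).trans_eq ?_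
  rw [sqrt_eq_rpow, one_div, ← rpow_neg hx0.le, ← rpow_mul hx0.le]
  norm_num

theorem abs_sum_octantHeight_sub_le {M : ℕ} (hx : 0 < x) (hM : 2 * (M : ℝ) ^ 2 ≤ x) :
    |∑ n ∈ Finset.range M, octantHeight x n - octantArea x M - (√x - octantHeight x M) / 2| ≤
      1 / 2 := by
  have hMx : (M : ℝ) ^ 2 < x := by nlinarith [sq_nonneg (M : ℝ)]
  have hlt (t) (ht : t ∈ Icc (0 : ℝ) M) : t ^ 2 < x :=
    (pow_le_pow_left₀ ht.1 ht.2 2).trans_lt hMx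
  have hanti : AntitoneOn (fun t ↦ -(t / √(x - t ^ 2)) - 1) (Icc 0 (M : ℝ)) := fun s hs t ht hst ↦
    sub_le_sub_right (neg_le_neg (monotoneOn_div_sqrt_sub_sq hMx hs ht hst)) 1
  have hslope : M / √(x - M ^ 2) ≤ 1 :=
    div_le_one_of_le₀ (le_sqrt_of_sq_le (by linarith)) (sqrt_nonneg _)
  have := abs_sum_range_sub_le_of_antitoneOn (fun t ht ↦ hasDerivAt_octantArea (hlt t ht))
    (fun t ht ↦ hasDerivAt_octantHeight (hlt t ht)) hanti
  rw [octantArea_zero, sub_zero, show octantHeight x 0 = √x by simp [octantHeight]] at this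
  refine this.trans ?_
  rw [zero_div]
  linarith

theorem octantArea_sqrt_half_sub_mem_Icc {M : ℕ} (hx : 0 < x) (hM : 2 * (M : ℝ) ^ 2 ≤ x)
    (hM' : x < 2 * (M + 1) ^ 2) : octantArea x √(x / 2) - octantArea x M ∈ Icc 0 2 := by
  have hM_le : (M : ℝ) ≤ √(x / 2) := le_sqrt_of_sq_le (by linarith)
  have hlt_M : √(x / 2) ≤ M + 1 := (sqrt_le_left (by positivity)).2 (by linarith)
  have hsq (t) (ht : t ∈ Icc (M : ℝ) √(x / 2)) : t ^ 2 ≤ x / 2 :=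
    (le_sqrt (M.cast_nonneg.trans ht.1) (by positivity)).1 ht.2
  have hderiv (t) (ht : t ∈ Icc (M : ℝ) √(x / 2)) :
      HasDerivAt (octantArea x) (octantHeight x t) t :=
    hasDerivAt_octantArea (by linarith [hsq t ht])
  have hmem (t) (ht : t ∈ Icc (M : ℝ) √(x / 2)) : octantHeight x t ∈ Icc 0 2 := by
    refine ⟨sub_nonneg.2 (le_sqrt_of_sq_le (by linarith [hsq t ht])), ?_⟩
    refine le_trans (sub_le_sub (sqrt_le_sqrt ?_) ht.1) (octantHeight_mem_Icc hM hM').2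
    gcongr
    exact ht.1
  constructor
  · have := sub_le_mul_of_hasDerivAt_le hM_le (fun t ht ↦ (hderiv t ht).fun_neg)
      fun t ht ↦ neg_nonpos.2 (hmem t ht).1
    linarith
  · have := sub_le_mul_of_hasDerivAt_le hM_le hderiv fun t ht ↦ (hmem t ht).2
    linarith

theorem abs_two_mul_sum_floor_octantHeight_sub_le {M : ℕ} (hx : 1 ≤ x) (hM : 2 * (M : ℝ) ^ 2 ≤ x)
    (hM' : x < 2 * (M + 1) ^ 2) :
    |2 * ∑ n ∈ Finset.range (M + 1), (⌊octantHeight x n⌋ : ℝ) + M - ⌊√x⌋ - π * x / 4| ≤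
      160 * x ^ (1 / 3 : ℝ) := by
  have hx0 : 0 < x := by linarith
  have hsaw := abs_le.1 (abs_sum_half_sub_fract_octantHeight_le hx hM)
  have htrap := abs_le.1 (abs_sum_octantHeight_sub_le hx0 hM)
  have harea := octantArea_sqrt_half_sub_mem_Icc hx0 hM hM'
  rw [octantArea_sqrt_half hx0, mem_Icc] at harea
  have hend := octantHeight_mem_Icc hM hM'
  have hend_floor : (0 : ℝ) ≤ ⌊octantHeight x M⌋ := mod_cast Int.floor_nonneg.2 hend.1
  have hend_floor' := Int.floor_le (octantHeight x M)
  have hsqrt := Int.floor_le √x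
  have hsqrt' := Int.lt_floor_add_one √x
  have hone : 1 ≤ x ^ (1 / 3 : ℝ) := one_le_rpow hx (by norm_num)
  have hfract : ∑ n ∈ Finset.range M, (1 / 2 - Int.fract (octantHeight x n)) =
      M / 2 - ∑ n ∈ Finset.range M, octantHeight x n +
        ∑ n ∈ Finset.range M, (⌊octantHeight x n⌋ : ℝ) := by
    simp only [← Int.self_sub_floor, Finset.sum_sub_distrib, Finset.sum_const, Finset.card_range,
      nsmul_eq_mul]
    ring
  rw [hfract] at hsaw
  rw [Finset.sum_range_succ, abs_le]
  constructor <;> linarith [hend.1, hend.2, harea.1, harea.2, hsaw.1, hsaw.2, htrap.1, htrap.2]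

/-- Lattice points of the quarter disk of radius `√x`. The half-open choice of axes makes these
points represent the nonzero Gaussian integers up to units. -/
def quarterDisk (x : ℝ) : Set (ℕ × ℕ) := {p | 0 < p.1 ∧ (p.1 ^ 2 + p.2 ^ 2 : ℝ) ≤ x}

theorem ncard_setOf_mem_and_mem {α β : Type*} (s : Finset α) (t : α → Finset β) :
    {p : α × β | p.1 ∈ s ∧ p.2 ∈ t p.1}.ncard = ∑ a ∈ s, (t a).card := by
  rw [← Finset.card_sigma, ← Finset.card_map (Equiv.sigmaEquivProd α β).toEmbedding,
    ← ncard_coe_finset]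
  congr 1
  ext ⟨a, b⟩
  simp

theorem le_natFloor_sqrt_sub_sq_iff {a b : ℕ} (hb : 0 < b) :
    b ≤ ⌊√(x - a ^ 2)⌋₊ ↔ (a ^ 2 + b ^ 2 : ℝ) ≤ x := by
  rw [Nat.le_floor_iff' hb.ne', le_sqrt' (mod_cast hb), le_sub_iff_add_le']

theorem le_of_two_mul_sq_le {M n : ℕ} (hM' : x < 2 * (M + 1) ^ 2) (hn : 2 * (n : ℝ) ^ 2 ≤ x) :
    n ≤ M := by
  by_contra! h
  have : (M + 1 : ℝ) ≤ n := mod_cast h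
  nlinarith

theorem ncard_quarterDisk_lt {M : ℕ} (hM' : x < 2 * (M + 1) ^ 2) :
    {p ∈ quarterDisk x | p.2 < p.1}.ncard =
      ∑ n ∈ Finset.range (M + 1), (⌊√(x - n ^ 2)⌋₊ - n) := by
  simp_rw [← Nat.card_Ioc]
  rw [← ncard_setOf_mem_and_mem, ← ncard_image_of_injective _ Prod.swap_injective,
    image_swap_eq_preimage_swap]
  congr 1
  ext ⟨b, a⟩
  simp only [quarterDisk, mem_preimage, mem_ofPred_eq, Prod.fst_swap, Prod.snd_swap,
    Finset.mem_range_succ_iff, Finset.mem_Ioc]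
  constructor
  · rintro ⟨⟨ha, h⟩, hab⟩
    rw [add_comm] at h
    have : (b : ℝ) ^ 2 ≤ a ^ 2 := by gcongr
    exact ⟨le_of_two_mul_sq_le hM' (by linarith), hab, (le_natFloor_sqrt_sub_sq_iff ha).2 h⟩
  · rintro ⟨-, hab, ha⟩
    have ha0 := b.zero_le.trans_lt hab
    exact ⟨⟨ha0, by rw [add_comm]; exact (le_natFloor_sqrt_sub_sq_iff ha0).1 ha⟩, hab⟩

theorem ncard_quarterDisk_le {M : ℕ} (hM' : x < 2 * (M + 1) ^ 2) :
    {p ∈ quarterDisk x | p.1 ≤ p.2}.ncard =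
      ∑ n ∈ Finset.Ico 1 (M + 1), (⌊√(x - n ^ 2)⌋₊ + 1 - n) := by
  simp_rw [← Nat.card_Icc]
  rw [← ncard_setOf_mem_and_mem]
  congr 1
  ext ⟨a, b⟩
  simp only [quarterDisk, mem_ofPred_eq, Finset.mem_Ico, Nat.lt_succ_iff, Finset.mem_Icc]
  constructor
  · rintro ⟨⟨ha, h⟩, hab⟩
    have : (a : ℝ) ^ 2 ≤ b ^ 2 := by gcongr
    exact ⟨⟨ha, le_of_two_mul_sq_le hM' (by linarith)⟩, hab,
      (le_natFloor_sqrt_sub_sq_iff (ha.trans_le hab)).2 h⟩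
  · rintro ⟨⟨ha, -⟩, hab, hb⟩
    exact ⟨⟨ha, (le_natFloor_sqrt_sub_sq_iff (Nat.lt_of_lt_of_le ha hab)).1 hb⟩, hab⟩

theorem finite_quarterDisk (x : ℝ) : (quarterDisk x).Finite := by
  refine ((finite_Iic ⌊x⌋₊).prod (finite_Iic ⌊x⌋₊)).subset fun p ⟨_, h⟩ ↦ ?_
  have h1 : (p.1 : ℝ) ≤ p.1 ^ 2 := mod_cast Nat.le_self_pow two_ne_zero _
  have h2 : (p.2 : ℝ) ≤ p.2 ^ 2 := mod_cast Nat.le_self_pow two_ne_zero _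
  constructor <;> exact Nat.le_floor (by nlinarith)

theorem ncard_quarterDisk {M : ℕ} (hM : 2 * (M : ℝ) ^ 2 ≤ x) (hM' : x < 2 * (M + 1) ^ 2) :
    ((quarterDisk x).ncard : ℤ) =
      2 * ∑ n ∈ Finset.range (M + 1), ⌊octantHeight x n⌋ + M - ⌊√x⌋ := by
  have hle (n) (hn : n ∈ Finset.range (M + 1)) : n ≤ ⌊√(x - n ^ 2)⌋₊ := by
    have hnM : (n : ℝ) ≤ M := mod_cast Finset.mem_range_succ_iff.1 hn
    refine Nat.le_floor (le_sqrt_of_sq_le ?_)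
    nlinarith
  have hfloor (n) (hn : n ∈ Finset.range (M + 1)) :
      (⌊octantHeight x n⌋ : ℤ) = (⌊√(x - n ^ 2)⌋₊ - n : ℕ) := by
    rw [octantHeight, Int.floor_sub_natCast, Nat.cast_sub (hle n hn),
      Int.natCast_floor_eq_floor (sqrt_nonneg _)]
  have hcover : quarterDisk x =
      {p ∈ quarterDisk x | p.2 < p.1} ∪ {p ∈ quarterDisk x | p.1 ≤ p.2} := by
    ext p
    simp [← and_or_left, lt_or_ge]
  have hdisj : Disjoint {p ∈ quarterDisk x | p.2 < p.1} {p ∈ quarterDisk x | p.1 ≤ p.2} :=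
    disjoint_left.2 fun p h h' ↦ h.2.not_ge h'.2
  have hsucc : ∑ n ∈ Finset.Ico 1 (M + 1), (⌊√(x - n ^ 2)⌋₊ + 1 - n) =
      ∑ n ∈ Finset.Ico 1 (M + 1), (⌊√(x - n ^ 2)⌋₊ - n) + M := by
    rw [Finset.sum_congr rfl fun n hn ↦ Nat.succ_sub (hle n (by grind))]
    simp [Finset.sum_add_distrib]
  rw [hcover, ncard_union_eq hdisj ((finite_quarterDisk x).sep _) ((finite_quarterDisk x).sep _),
    ncard_quarterDisk_lt hM', ncard_quarterDisk_le hM', hsucc, Finset.sum_congr rfl hfloor,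
    Finset.range_eq_Ico, Finset.sum_eq_sum_Ico_succ_bot M.succ_pos,
    Finset.sum_eq_sum_Ico_succ_bot M.succ_pos, ← Int.natCast_floor_eq_floor (sqrt_nonneg x),
    Nat.cast_zero, zero_pow two_ne_zero, sub_zero, Nat.sub_zero]
  push_cast
  ring

theorem abs_ncard_quarterDisk_sub_le (hx : 0 < x) :
    |(quarterDisk x).ncard - π / 4 * x| ≤ 160 * x ^ (1 / 3 : ℝ) := by
  obtain hx1 | hx1 := lt_or_ge x 1
  · have hempty : quarterDisk x = ∅ := by
      refine eq_empty_of_forall_notMem fun p ⟨hp, hpx⟩ ↦ ?_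
      have : (1 : ℝ) ≤ p.1 := mod_cast hp
      nlinarith [sq_nonneg (p.2 : ℝ)]
    have hx_le : x ≤ x ^ (1 / 3 : ℝ) := by
      simpa using rpow_le_rpow_of_exponent_ge hx hx1.le (show (1 / 3 : ℝ) ≤ 1 by norm_num)
    rw [hempty, ncard_empty, Nat.cast_zero, zero_sub, abs_neg, abs_of_pos (by positivity)]
    nlinarith [pi_pos, pi_le_four]
  · have hM : 2 * (⌊√(x / 2)⌋₊ : ℝ) ^ 2 ≤ x := by
      have := (le_sqrt (Nat.cast_nonneg _) (by positivity)).1 (Nat.floor_le (sqrt_nonneg (x / 2)))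
      linarith
    have hM' : x < 2 * (⌊√(x / 2)⌋₊ + 1 : ℝ) ^ 2 := by
      have := (sqrt_lt' (by positivity)).1 (Nat.lt_floor_add_one √(x / 2))
      linarith
    have hcard := ncard_quarterDisk hM hM'
    rw [← Int.cast_natCast, hcard, div_mul_eq_mul_div]
    push_cast
    exact abs_two_mul_sum_floor_octantHeight_sub_le hx1 hM hM'

end QuarterDisk

section Moebius

open Finset UniqueFactorizationMonoid

variable {α : Type*} [CommMonoidWithZero α] [UniqueFactorizationMonoid α]

theorem norm_intCast_moebius_le_one (𝕜 : Type*) [NormedField 𝕜] (a : α) :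
    ‖(moebius a : 𝕜)‖ ≤ 1 := by
  by_cases ha : Squarefree a
  · simp [ha.moebius_eq]
  · simp [moebius_of_not_squarefree ha]

theorem moebius_prime_mul {p a : α} (hp : Prime p) (ha : ¬p ∣ a) :
    moebius (p * a) = -moebius a := by
  rw [((hp.irreducible.isRelPrime_iff_not_dvd).2 ha).moebius_mul, hp.irreducible.moebius_eq,
    neg_one_mul]

theorem moebius_prime_mul_of_dvd {p a : α} (hp : Prime p) (ha : p ∣ a) : moebius (p * a) = 0 :=
  moebius_of_not_squarefree fun h ↦ hp.not_isUnit (h p (mul_dvd_mul_left p ha))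

variable [Subsingleton αˣ]

theorem sum_moebius_of_mem_iff_dvd [DecidableEq α] {a : α} {s : Finset α} (ha : a ≠ 0)
    (hs : ∀ d, d ∈ s ↔ d ∣ a) : ∑ d ∈ s, moebius d = if a = 1 then 1 else 0 := by
  classical
  split_ifs with ha1
  · have : s = {1} := by
      ext d
      rw [hs, ha1, mem_singleton, ← isUnit_iff_dvd_one, isUnit_iff_eq_one]
    rw [this, sum_singleton, moebius_one]
  obtain ⟨p, hp, hpa⟩ := WfDvdMonoid.exists_irreducible_factor (mt isUnit_iff_eq_one.1 ha1) ha
  have hp := hp.prime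
  have hsub : {d ∈ s | ¬p ∣ d}.image (p * ·) ⊆ {d ∈ s | p ∣ d} := by
    intro d hd
    obtain ⟨e, he, rfl⟩ := mem_image.1 hd
    obtain ⟨he, hpe⟩ := mem_filter.1 he
    refine mem_filter.2 ⟨(hs _).2 ?_, dvd_mul_right p e⟩
    exact ((hp.irreducible.isRelPrime_iff_not_dvd).2 hpe).mul_dvd hpa ((hs e).1 he)
  have hdvd : ∑ d ∈ s with p ∣ d, moebius d = ∑ d ∈ s with ¬p ∣ d, moebius (p * d) := by
    rw [← sum_image (f := moebius) fun _ _ _ _ h ↦ mul_left_cancel₀ hp.ne_zero h]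
    refine (sum_subset hsub fun d hd hd' ↦ ?_).symm
    obtain ⟨hd, e, rfl⟩ := mem_filter.1 hd
    refine moebius_prime_mul_of_dvd hp ?_
    contrapose! hd'
    exact mem_image_of_mem _
      (mem_filter.2 ⟨(hs e).2 ((dvd_mul_left e p).trans ((hs _).1 hd)), hd'⟩)
  rw [← sum_filter_add_sum_filter_not s (p ∣ ·), hdvd, ← sum_add_distrib]
  refine sum_eq_zero fun d hd ↦ ?_
  rw [moebius_prime_mul hp (mem_filter.1 hd).2, neg_add_cancel]

theorem finite_setOf_dvd {a : α} (ha : a ≠ 0) : {d | d ∣ a}.Finite :=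
  letI := Fintype.ofFinite αˣ
  letI := fintypeSubtypeDvd a ha
  Set.finite_coe_iff.1 (Finite.of_fintype {d // d ∣ a})

theorem tsum_fiber_moebius_mul {𝕜 : Type*} [NormedField 𝕜] [DecidableEq α] (f : α →*₀ 𝕜) (c : α) :
    ∑' z : (fun z : α × α ↦ z.1 * z.2) ⁻¹' {c}, moebius z.1.1 * f z.1.1 * f z.1.2 =
      if c = 1 then 1 else 0 := by
  have hmul (z : (fun z : α × α ↦ z.1 * z.2) ⁻¹' {c}) : z.1.1 * z.1.2 = c := z.2
  simp_rw [mul_assoc, ← map_mul, hmul]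
  obtain rfl | hc := eq_or_ne c 0
  · have : (0 : α) ≠ 1 := fun h ↦ zero_ne_one (α := 𝕜) (by rw [← map_zero f, h, map_one])
    simp [this]
  have hinj : Set.InjOn Prod.fst ((fun z : α × α ↦ z.1 * z.2) ⁻¹' {c}) := by
    rintro ⟨d, e⟩ h ⟨_, e'⟩ h' rfl
    have hd : d ≠ 0 := left_ne_zero_of_mul (h.trans_ne hc)
    exact Prod.ext rfl (mul_left_cancel₀ hd (h.trans h'.symm))
  have himage : Prod.fst '' ((fun z : α × α ↦ z.1 * z.2) ⁻¹' {c}) =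
      (finite_setOf_dvd hc).toFinset := by
    ext d
    simp [dvd_iff_exists_eq_mul_right, eq_comm]
  rw [← tsum_image (fun d ↦ (moebius d : 𝕜) * f c) hinj, himage,
    Finset.tsum_subtype' _ fun d ↦ (moebius d : 𝕜) * f c, ← sum_mul, ← Int.cast_sum,
    sum_moebius_of_mem_iff_dvd hc fun d ↦ Set.Finite.mem_toFinset _]
  split_ifs with h <;> simp [h]

theorem tsum_moebius_mul_tsum {𝕜 : Type*} [NormedField 𝕜] [CompleteSpace 𝕜] (f : α →*₀ 𝕜)
    (hf : Summable fun a ↦ ‖f a‖) :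
    (∑' a, moebius a * f a) * ∑' a, f a = 1 := by
  classical
  have hμf : Summable fun a ↦ ‖moebius a * f a‖ := by
    refine hf.of_nonneg_of_le (fun _ ↦ norm_nonneg _) fun a ↦ ?_
    rw [norm_mul]
    exact mul_le_of_le_one_left (norm_nonneg _) (norm_intCast_moebius_le_one 𝕜 a)
  have hsum := (summable_mul_of_summable_norm hμf hf).hasSum.tsum_fiberwise fun z ↦ z.1 * z.2
  rw [tsum_mul_tsum_of_summable_norm hμf hf, ← hsum.tsum_eq]
  simp_rw [tsum_fiber_moebius_mul]
  exact tsum_ite_eq 1 _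

end Moebius

section IdealPairs

open Finset UniqueFactorizationMonoid

variable {R : Type*} [CommRing R] [IsDedekindDomain R] [Module.Free ℤ R]

/-- `idealsNormLE R t` is the set of nonzero ideals of `R` of absolute norm at most `t`, whose
cardinality is the ideal-counting function of `R`. -/
def idealsNormLE (R : Type*) [CommRing R] [IsDedekindDomain R] [Module.Free ℤ R] (t : ℝ) :
    Set (Ideal R) :=
  {I | I ≠ ⊥ ∧ (I.absNorm : ℝ) ≤ t}

/-- `gcdPairs t K` is the set of pairs of nonzero ideals of norm at most `t` with greatest common
divisor `K`; the coprime pairs are `gcdPairs t ⊤`. -/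
def gcdPairs (t : ℝ) (K : Ideal R) : Set (Ideal R × Ideal R) :=
  {p ∈ idealsNormLE R t ×ˢ idealsNormLE R t | p.1 ⊔ p.2 = K}

theorem hasSum_moebius_mul_inv_absNorm_sq
    (hs : Summable fun I : Ideal R ↦ 1 / (I.absNorm : ℝ) ^ 2) :
    HasSum (fun D : Ideal R ↦ (moebius D : ℝ) * (1 / (D.absNorm : ℝ) ^ 2))
      (∑' I : Ideal R, 1 / (I.absNorm : ℝ) ^ 2)⁻¹ := by
  let f : Ideal R →*₀ ℝ :=
    { toFun I := 1 / (I.absNorm : ℝ) ^ 2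
      map_zero' := by simp
      map_one' := by simp
      map_mul' I J := by rw [map_mul, Nat.cast_mul, mul_pow, one_div_mul_one_div] }
  have hinv : ∑' D : Ideal R, (moebius D : ℝ) * (1 / (D.absNorm : ℝ) ^ 2) =
      (∑' I : Ideal R, 1 / (I.absNorm : ℝ) ^ 2)⁻¹ :=
    eq_inv_of_mul_eq_one_left (tsum_moebius_mul_tsum f hs.norm)
  rw [← hinv]
  refine (Summable.of_norm_bounded hs.norm fun D ↦ ?_).hasSum
  rw [norm_mul]
  exact mul_le_of_le_one_left (norm_nonneg _) (norm_intCast_moebius_le_one ℝ D)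

variable [Module.Finite ℤ R] {t : ℝ} {D I K : Ideal R}

theorem one_le_absNorm (hK : K ≠ ⊥) : (1 : ℝ) ≤ K.absNorm :=
  Nat.one_le_cast.2 (Nat.one_le_iff_ne_zero.2 (mt Ideal.absNorm_eq_zero_iff.1 hK))

theorem absNorm_pos (hK : K ≠ ⊥) : (0 : ℝ) < K.absNorm :=
  one_pos.trans_le (one_le_absNorm hK)

theorem mul_mem_idealsNormLE_iff (hK : K ≠ ⊥) :
    K * I ∈ idealsNormLE R t ↔ I ∈ idealsNormLE R (t / K.absNorm) := by
  simp only [idealsNormLE, Set.mem_ofPred_eq, ← Ideal.zero_eq_bot, mul_ne_zero_iff, map_mul,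
    Nat.cast_mul, le_div_iff₀' (absNorm_pos hK)]
  rw [and_iff_right (show K ≠ 0 from hK)]

theorem mem_idealsNormLE_of_dvd (hI : I ∈ idealsNormLE R t) (h : D ∣ I) : D ∈ idealsNormLE R t := by
  refine ⟨ne_zero_of_dvd_ne_zero hI.1 h, le_trans (Nat.cast_le.2 ?_) hI.2⟩
  exact Nat.le_of_dvd (Nat.cast_pos.1 (absNorm_pos hI.1)) (map_dvd Ideal.absNorm h)

theorem ncard_setOf_dvd_idealsNormLE (hK : K ≠ ⊥) :
    {I ∈ idealsNormLE R t | K ∣ I}.ncard = (idealsNormLE R (t / K.absNorm)).ncard := by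
  rw [← Set.ncard_image_of_injective (idealsNormLE R (t / K.absNorm)) (mul_right_injective₀ hK)]
  congr 1
  ext I
  constructor
  · rintro ⟨hI, J, rfl⟩
    exact ⟨J, (mul_mem_idealsNormLE_iff hK).1 hI, rfl⟩
  · rintro ⟨J, hJ, rfl⟩
    exact ⟨(mul_mem_idealsNormLE_iff hK).2 hJ, dvd_mul_right K J⟩

theorem gcdPairs_eq_image (hK : K ≠ ⊥) :
    gcdPairs t K = Prod.map (K * ·) (K * ·) '' gcdPairs (t / K.absNorm) ⊤ := by
  ext ⟨I, J⟩
  constructor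
  · rintro ⟨⟨hI, hJ⟩, hK'⟩
    obtain ⟨I, rfl⟩ : K ∣ I := Ideal.dvd_iff_le.2 (hK' ▸ le_sup_left)
    obtain ⟨J, rfl⟩ : K ∣ J := Ideal.dvd_iff_le.2 (hK' ▸ le_sup_right)
    refine ⟨(I, J), ⟨⟨(mul_mem_idealsNormLE_iff hK).1 hI, (mul_mem_idealsNormLE_iff hK).1 hJ⟩, ?_⟩,
      rfl⟩
    exact mul_left_cancel₀ hK (by rw [Ideal.mul_sup, hK', Ideal.mul_top])
  · rintro ⟨⟨I, J⟩, ⟨⟨hI, hJ⟩, hIJ⟩, h⟩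
    obtain ⟨rfl, rfl⟩ := Prod.ext_iff.1 h
    refine ⟨⟨(mul_mem_idealsNormLE_iff hK).2 hI, (mul_mem_idealsNormLE_iff hK).2 hJ⟩, ?_⟩
    exact (Ideal.mul_sup K I J).symm.trans (by rw [hIJ, Ideal.mul_top])

theorem ncard_gcdPairs (hK : K ≠ ⊥) :
    (gcdPairs t K).ncard = (gcdPairs (t / K.absNorm) (⊤ : Ideal R)).ncard := by
  have hinj : Function.Injective (K * · : Ideal R → Ideal R) := mul_right_injective₀ hK
  rw [gcdPairs_eq_image hK, Set.ncard_image_of_injective _ (hinj.prodMap hinj)]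

theorem idealsNormLE_eq_empty (ht : t < 1) : idealsNormLE R t = ∅ := by
  refine Set.eq_empty_of_forall_notMem fun I ⟨hI, hIt⟩ ↦ ?_
  linarith [one_le_absNorm hI]

theorem finite_idealsNormLE [CharZero R] (t : ℝ) : (idealsNormLE R t).Finite :=
  (Ideal.finite_setOfPred_absNorm_le ⌊t⌋₊).subset fun _ hI ↦ Nat.le_floor hI.2

theorem ncard_gcdPairs_top_eq_sum {s : Finset (Ideal R)} (hs : ↑s = idealsNormLE R t) :
    ((gcdPairs t (⊤ : Ideal R)).ncard : ℤ) =
      ∑ D ∈ s, moebius D * ((idealsNormLE R (t / D.absNorm)).ncard : ℤ) ^ 2 := by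
  classical
  have hmem (I : Ideal R) : I ∈ s ↔ I ∈ idealsNormLE R t := by rw [← hs, mem_coe]
  have hcoprime : gcdPairs t (⊤ : Ideal R) = {p ∈ s ×ˢ s | p.1 ⊔ p.2 = 1} := by
    ext p
    simp [gcdPairs, hmem, Ideal.one_eq_top]
  have hdvd (D : Ideal R) (hD : D ∈ s) :
      #{I ∈ s | D ∣ I} = (idealsNormLE R (t / D.absNorm)).ncard := by
    rw [← ncard_setOf_dvd_idealsNormLE ((hmem D).1 hD).1, ← hs, ← Set.ncard_coe_finset]
    congr 1
    ext I
    simp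
  calc ((gcdPairs t (⊤ : Ideal R)).ncard : ℤ)
      = ∑ p ∈ s ×ˢ s, if p.1 ⊔ p.2 = 1 then 1 else 0 := by
        rw [hcoprime, Set.ncard_coe_finset, sum_boole]
    _ = ∑ p ∈ s ×ˢ s, ∑ D ∈ s with D ∣ p.1 ⊔ p.2, moebius D := by
        refine sum_congr rfl fun p hp ↦ (sum_moebius_of_mem_iff_dvd ?_ fun D ↦ ?_).symm
        · exact ne_bot_of_le_ne_bot ((hmem _).1 (mem_product.1 hp).1).1 le_sup_left
        · refine ⟨fun hD ↦ (mem_filter.1 hD).2, fun hD ↦ mem_filter.2 ⟨(hmem D).2 ?_, hD⟩⟩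
          exact mem_idealsNormLE_of_dvd ((hmem _).1 (mem_product.1 hp).1)
            (hD.trans (Ideal.dvd_iff_le.2 le_sup_left))
    _ = ∑ D ∈ s, ∑ p ∈ s ×ˢ s with D ∣ p.1 ∧ D ∣ p.2, moebius D := by
        simp_rw [sum_filter, Ideal.dvd_iff_le, sup_le_iff]
        exact sum_comm
    _ = ∑ D ∈ s, moebius D * ((idealsNormLE R (t / D.absNorm)).ncard : ℤ) ^ 2 := by
        refine sum_congr rfl fun D hD ↦ ?_
        rw [filter_product, sum_const, card_product, hdvd D hD, nsmul_eq_mul, Nat.cast_mul,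
          mul_comm, sq]

theorem hasSum_moebius_mul_ncard_idealsNormLE_sq [CharZero R] (t : ℝ) :
    HasSum (fun D : Ideal R ↦ (moebius D : ℝ) * ((idealsNormLE R (t / D.absNorm)).ncard : ℝ) ^ 2)
      (gcdPairs t (⊤ : Ideal R)).ncard := by
  have hs := (finite_idealsNormLE (R := R) t).coe_toFinset
  rw [← Int.cast_natCast, ncard_gcdPairs_top_eq_sum hs]
  push_cast
  refine hasSum_sum_of_ne_finset_zero fun D hD ↦ ?_
  obtain rfl | hD0 := eq_or_ne D 0
  · rw [moebius_zero, Int.cast_zero, zero_mul]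
  have hDt : t / D.absNorm < 1 := by
    rw [div_lt_one (absNorm_pos hD0)]
    by_contra! h
    exact hD ((Set.Finite.mem_toFinset _).2 ⟨hD0, h⟩)
  rw [idealsNormLE_eq_empty hDt, Set.ncard_empty, Nat.cast_zero, zero_pow two_ne_zero, mul_zero]

theorem abs_ncard_idealsNormLE_sq_sub_le {κ C θ : ℝ} (hθ : θ ≤ 1)
    (hA : ∀ t > 0, |(idealsNormLE R t).ncard - κ * t| ≤ C * t ^ θ) (ht : 0 < t) :
    |((idealsNormLE R t).ncard : ℝ) ^ 2 - κ ^ 2 * t ^ 2| ≤ C * (C + 2 * |κ|) * t ^ (1 + θ) := by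
  have hC : 0 ≤ C := by simpa using (abs_nonneg _).trans (hA 1 one_pos)
  have hsum : |(idealsNormLE R t).ncard + κ * t| ≤ (C + 2 * |κ|) * t := by
    obtain ht1 | ht1 := lt_or_ge t 1
    · rw [idealsNormLE_eq_empty ht1, Set.ncard_empty, Nat.cast_zero, zero_add, abs_mul,
        abs_of_pos ht]
      gcongr
      linarith [abs_nonneg κ]
    · have hpow : t ^ θ ≤ t := by simpa using rpow_le_rpow_of_exponent_le ht1 hθ
      calc |(idealsNormLE R t).ncard + κ * t|
          = |((idealsNormLE R t).ncard - κ * t) + 2 * κ * t| := by ring_nf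
        _ ≤ C * t + 2 * |κ| * t := by
            refine (abs_add_le _ _).trans (add_le_add ((hA t ht).trans (by gcongr)) ?_)
            rw [abs_mul, abs_mul, abs_of_pos ht, abs_two]
        _ = (C + 2 * |κ|) * t := by ring
  calc |((idealsNormLE R t).ncard : ℝ) ^ 2 - κ ^ 2 * t ^ 2|
      = |(idealsNormLE R t).ncard - κ * t| * |(idealsNormLE R t).ncard + κ * t| := by
        rw [← abs_mul]; ring_nf
    _ ≤ C * t ^ θ * ((C + 2 * |κ|) * t) :=
        mul_le_mul (hA t ht) hsum (abs_nonneg _) (by positivity)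
    _ = C * (C + 2 * |κ|) * t ^ (1 + θ) := by rw [rpow_add ht, rpow_one]; ring

theorem norm_moebius_mul_ncard_sq_sub_le {κ C θ : ℝ} (hθ : θ ≤ 1)
    (hA : ∀ t > 0, |(idealsNormLE R t).ncard - κ * t| ≤ C * t ^ θ) (ht : 0 < t) (D : Ideal R) :
    ‖(moebius D : ℝ) * ((idealsNormLE R (t / D.absNorm)).ncard : ℝ) ^ 2 -
        κ ^ 2 * t ^ 2 * ((moebius D : ℝ) * (1 / (D.absNorm : ℝ) ^ 2))‖ ≤
      C * (C + 2 * |κ|) * t ^ (1 + θ) * (D.absNorm : ℝ) ^ (-(1 + θ)) := by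
  have hC : 0 ≤ C := by simpa using (abs_nonneg _).trans (hA 1 one_pos)
  obtain rfl | hD := eq_or_ne D 0
  · rw [moebius_zero, Int.cast_zero, zero_mul, zero_mul, mul_zero, sub_zero, norm_zero]
    positivity
  have hD' := absNorm_pos hD
  calc _ = ‖(moebius D : ℝ)‖ *
        |((idealsNormLE R (t / D.absNorm)).ncard : ℝ) ^ 2 - κ ^ 2 * (t / D.absNorm) ^ 2| := by
        rw [← norm_eq_abs, ← norm_mul]; ring_nf
    _ ≤ 1 * (C * (C + 2 * |κ|) * (t / D.absNorm) ^ (1 + θ)) := by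
        gcongr
        · exact norm_intCast_moebius_le_one ℝ D
        · exact abs_ncard_idealsNormLE_sq_sub_le hθ hA (by positivity)
    _ = C * (C + 2 * |κ|) * t ^ (1 + θ) * (D.absNorm : ℝ) ^ (-(1 + θ)) := by
        rw [one_mul, div_rpow ht.le hD'.le, rpow_neg hD'.le, div_eq_mul_inv, mul_assoc _ (t ^ _)]

theorem abs_ncard_gcdPairs_top_sub_le [CharZero R] {κ C θ : ℝ} (hθ : θ ≤ 1)
    (hA : ∀ t > 0, |(idealsNormLE R t).ncard - κ * t| ≤ C * t ^ θ)
    (hs : Summable fun I : Ideal R ↦ (I.absNorm : ℝ) ^ (-(1 + θ))) (ht : 0 < t) :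
    |(gcdPairs t (⊤ : Ideal R)).ncard - κ ^ 2 * t ^ 2 / ∑' I : Ideal R, 1 / (I.absNorm : ℝ) ^ 2| ≤
      C * (C + 2 * |κ|) * (∑' I : Ideal R, (I.absNorm : ℝ) ^ (-(1 + θ))) * t ^ (1 + θ) := by
  have hs2 : Summable fun I : Ideal R ↦ 1 / (I.absNorm : ℝ) ^ 2 := by
    refine hs.of_nonneg_of_le (fun _ ↦ by positivity) fun I ↦ ?_
    obtain rfl | hI := eq_or_ne I 0
    · rw [map_zero, Nat.cast_zero, zero_pow two_ne_zero, div_zero]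
      positivity
    · calc 1 / (I.absNorm : ℝ) ^ 2 = (I.absNorm : ℝ) ^ (-2 : ℝ) := by
            rw [rpow_neg (by positivity), one_div, rpow_two]
        _ ≤ (I.absNorm : ℝ) ^ (-(1 + θ)) :=
            rpow_le_rpow_of_exponent_le (one_le_absNorm hI) (by linarith)
  have hdiff := (hasSum_moebius_mul_ncard_idealsNormLE_sq t).sub
    ((hasSum_moebius_mul_inv_absNorm_sq hs2).mul_left (κ ^ 2 * t ^ 2))
  rw [div_eq_mul_inv]
  exact (hdiff.norm_le_of_bounded (hs.hasSum.mul_left (C * (C + 2 * |κ|) * t ^ (1 + θ)))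
    (norm_moebius_mul_ncard_sq_sub_le hθ hA ht)).trans_eq (by ring)

theorem abs_ncard_gcdPairs_sub_le [CharZero R] {κ C θ : ℝ} (hθ : θ ≤ 1)
    (hA : ∀ t > 0, |(idealsNormLE R t).ncard - κ * t| ≤ C * t ^ θ)
    (hs : Summable fun I : Ideal R ↦ (I.absNorm : ℝ) ^ (-(1 + θ))) (ht : 0 < t) (hK : K ≠ ⊥) :
    |(gcdPairs t K).ncard -
        κ ^ 2 * (t / K.absNorm) ^ 2 / ∑' I : Ideal R, 1 / (I.absNorm : ℝ) ^ 2| ≤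
      C * (C + 2 * |κ|) * (∑' I : Ideal R, (I.absNorm : ℝ) ^ (-(1 + θ))) *
        (t / K.absNorm) ^ (1 + θ) := by
  rw [ncard_gcdPairs hK]
  exact abs_ncard_gcdPairs_top_sub_le hθ hA hs (div_pos ht (absNorm_pos hK))

end IdealPairs

section GaussianIntegers

/-- The `ℤ`-basis `1, √d` of `ℤ√d`, which makes its algebra and ideal norms computable. -/
noncomputable def zsqrtdBasis (d : ℤ) : Module.Basis (Fin 2) ℤ (ℤ√d) :=
  Module.Basis.ofEquivFun
    { toFun z := ![z.re, z.im]
      invFun v := ⟨v 0, v 1⟩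
      map_add' z w := by simp
      map_smul' n z := by simp
      left_inv z := by simp
      right_inv v := by ext i; fin_cases i <;> rfl }

instance (d : ℤ) : Module.Free ℤ (ℤ√d) := .of_basis (zsqrtdBasis d)

instance (d : ℤ) : Module.Finite ℤ (ℤ√d) := .of_basis (zsqrtdBasis d)

theorem algebraNorm_zsqrtd {d : ℤ} (z : ℤ√d) : Algebra.norm ℤ z = z.norm := by
  rw [Algebra.norm_eq_matrix_det (zsqrtdBasis d), Matrix.det_fin_two]
  simp [Algebra.leftMulMatrix_eq_repr_mul, zsqrtdBasis, Zsqrtd.norm_def]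

theorem absNorm_span_gaussianInt (z : GaussianInt) :
    ((Ideal.span {z}).absNorm : ℝ) = (z.re : ℝ) ^ 2 + (z.im : ℝ) ^ 2 := by
  rw [Ideal.absNorm_span_singleton, algebraNorm_zsqrtd, GaussianInt.natCast_natAbs_norm,
    Zsqrtd.norm_def]
  push_cast
  ring

theorem gaussianInt_isUnit_iff {u : GaussianInt} :
    IsUnit u ↔ u = 1 ∨ u = -1 ∨ u = ⟨0, 1⟩ ∨ u = ⟨0, -1⟩ := by
  rw [← Zsqrtd.norm_eq_one_iff' (by decide)]
  constructor
  · obtain ⟨a, b⟩ := u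
    intro h
    have h : a * a + b * b = 1 := by simpa [Zsqrtd.norm_def] using h
    obtain ⟨ha, ha'⟩ : -1 ≤ a ∧ a ≤ 1 := by constructor <;> nlinarith
    obtain ⟨hb, hb'⟩ : -1 ≤ b ∧ b ≤ 1 := by constructor <;> nlinarith
    interval_cases a <;> interval_cases b <;> first | omega | decide
  · rintro (rfl | rfl | rfl | rfl) <;> rfl

/-- `spanPoint (a, b)` is the ideal of `ℤ[i]` generated by `a + bi`. -/
def spanPoint (p : ℕ × ℕ) : Ideal GaussianInt := Ideal.span {⟨p.1, p.2⟩}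

theorem injOn_spanPoint : Set.InjOn spanPoint {p | 0 < p.1} := by
  rintro ⟨a, b⟩ (ha : 0 < a) ⟨c, d⟩ (hc : 0 < c) h
  obtain ⟨⟨u, _, huv, hvu⟩, hu⟩ := Ideal.span_singleton_eq_span_singleton.1 h
  rcases gaussianInt_isUnit_iff.1 (.of_mul_eq_one _ huv) with rfl | rfl | rfl | rfl <;>
    simp [Zsqrtd.ext_iff] at hu <;> ext <;> grind

theorem exists_spanPoint_eq {I : Ideal GaussianInt} (hI : I ≠ ⊥) :
    ∃ p : ℕ × ℕ, 0 < p.1 ∧ spanPoint p = I := by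
  obtain ⟨⟨a, b⟩, rfl⟩ := (IsPrincipalIdealRing.principal I).principal
  suffices ∃ u : GaussianInt, IsUnit u ∧ 0 < (⟨a, b⟩ * u : GaussianInt).re ∧
      0 ≤ (⟨a, b⟩ * u : GaussianInt).im by
    obtain ⟨u, hu, hre, him⟩ := this
    refine ⟨((⟨a, b⟩ * u : GaussianInt).re.toNat, (⟨a, b⟩ * u : GaussianInt).im.toNat),
      Int.lt_toNat.2 hre, ?_⟩
    rw [spanPoint, Int.toNat_of_nonneg hre.le, Int.toNat_of_nonneg him]
    exact Ideal.span_singleton_mul_right_unit hu _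
  have hab : a ≠ 0 ∨ b ≠ 0 := by
    by_contra! h
    exact hI (Ideal.span_singleton_eq_bot.2 (Zsqrtd.ext h.1 h.2))
  simp only [gaussianInt_isUnit_iff, or_and_right, exists_or, exists_eq_left]
  simp
  omega

theorem bijOn_spanPoint (t : ℝ) :
    Set.BijOn spanPoint (quarterDisk t) (idealsNormLE GaussianInt t) := by
  have hnorm (p : ℕ × ℕ) : ((spanPoint p).absNorm : ℝ) = p.1 ^ 2 + p.2 ^ 2 := by
    rw [spanPoint, absNorm_span_gaussianInt, Int.cast_natCast, Int.cast_natCast]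
  refine ⟨fun p ⟨hp, hpt⟩ ↦ ⟨?_, (hnorm p).trans_le hpt⟩, injOn_spanPoint.mono fun p hp ↦ hp.1,
    fun I ⟨hI, hIt⟩ ↦ ?_⟩
  · rw [Ne, ← Ideal.absNorm_eq_zero_iff, ← Nat.cast_eq_zero (R := ℝ), hnorm]
    positivity
  · obtain ⟨p, hp, rfl⟩ := exists_spanPoint_eq hI
    exact ⟨p, ⟨hp, (hnorm p).symm.trans_le hIt⟩, rfl⟩

theorem abs_ncard_idealsNormLE_gaussianInt_sub_le {t : ℝ} (ht : 0 < t) :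
    |(idealsNormLE GaussianInt t).ncard - π / 4 * t| ≤ 160 * t ^ (1 / 3 : ℝ) := by
  rw [← (bijOn_spanPoint t).ncard_eq]
  exact abs_ncard_quarterDisk_sub_le ht

theorem norm_vec_sq_le (a b : ℤ) : ‖![a, b]‖ ^ 2 ≤ (a : ℝ) ^ 2 + (b : ℝ) ^ 2 := by
  rw [← le_sqrt (norm_nonneg _) (by positivity), pi_norm_le_iff_of_nonneg (sqrt_nonneg _),
    Fin.forall_fin_two]
  constructor <;> refine le_sqrt_of_sq_le ?_ <;> simp [Int.norm_eq_abs, sq_nonneg]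

theorem summable_absNorm_gaussianInt_rpow {s : ℝ} (hs : 1 < s) :
    Summable fun I : Ideal GaussianInt ↦ (I.absNorm : ℝ) ^ (-s) := by
  choose z hz using fun I : Ideal GaussianInt ↦ (IsPrincipalIdealRing.principal I).principal
  change ∀ I, I = Ideal.span {z I} at hz
  let v (I : Ideal GaussianInt) : Fin 2 → ℤ := ![(z I).re, (z I).im]
  have hv : Function.Injective v := fun I J h ↦ by
    rw [hz I, hz J, Zsqrtd.ext (congrFun h 0) (congrFun h 1)]
  refine .of_nonneg_of_le (fun _ ↦ by positivity) (fun I ↦ ?_)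
    ((EisensteinSeries.summable_one_div_norm_rpow (k := 2 * s) (by linarith)).comp_injective hv)
  obtain rfl | hI := eq_or_ne I ⊥
  · rw [Ideal.absNorm_bot, Nat.cast_zero, zero_rpow (by linarith)]
    exact rpow_nonneg (norm_nonneg _) _
  have hv0 : 0 < ‖v I‖ := by
    refine norm_pos_iff.2 fun h ↦ hI ?_
    rw [hz I, Ideal.span_singleton_eq_bot]
    exact Zsqrtd.ext (congrFun h 0) (congrFun h 1)
  have hle : ‖v I‖ ^ 2 ≤ I.absNorm := by
    rw [hz I, absNorm_span_gaussianInt, ← hz I]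
    exact norm_vec_sq_le _ _
  calc (I.absNorm : ℝ) ^ (-s) ≤ (‖v I‖ ^ 2) ^ (-s) :=
        rpow_le_rpow_of_nonpos (by positivity) hle (by linarith)
    _ = ‖v I‖ ^ (-(2 * s)) := by rw [← rpow_natCast_mul hv0.le, Nat.cast_ofNat, mul_neg]

theorem normI_eq_absNorm (I : Ideal GaussianInt) : normI I = I.absNorm := by
  rw [Ideal.absNorm_apply, Submodule.cardQuot_apply]
  rfl

theorem zetaQi2_eq_tsum : zetaQi2 = ∑' I : Ideal GaussianInt, 1 / (I.absNorm : ℝ) ^ 2 := by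
  simp_rw [zetaQi2, normI_eq_absNorm]
  refine tsum_subtype_eq_of_support_subset (s := {I : Ideal GaussianInt | I ≠ ⊥})
    (f := fun I ↦ 1 / (I.absNorm : ℝ) ^ 2) fun I hI ↦ ?_
  rintro rfl
  simp at hI

theorem sep_P_eq_gcdPairs (x : ℝ) (K : Ideal GaussianInt) :
    {p ∈ P x | p.1 ⊔ p.2 = K} = gcdPairs x K := by
  ext p
  simp only [P, gcdPairs, idealsNormLE, normI_eq_absNorm, Set.mem_ofPred_eq, Set.mem_prod]
  tauto

end GaussianIntegers

theorem gcdPairCount_asymptotic :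
    ∃ C : ℝ, 0 < C ∧ ∀ x : ℝ, 1 ≤ x → ∀ K : Ideal GaussianInt, K ≠ ⊥ →
      |({p ∈ P x | p.1 ⊔ p.2 = K}.ncard : ℝ) -
          π ^ 2 * x ^ 2 / (16 * zetaQi2 * (normI K : ℝ) ^ 2)|
        ≤ C * x ^ ((4 : ℝ) / 3) / (normI K : ℝ) ^ ((4 : ℝ) / 3) := by
  have hsum : Summable fun I : Ideal GaussianInt ↦ (I.absNorm : ℝ) ^ (-(1 + 1 / 3 : ℝ)) :=
    summable_absNorm_gaussianInt_rpow (by norm_num)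
  have hpos : 0 < ∑' I : Ideal GaussianInt, (I.absNorm : ℝ) ^ (-(1 + 1 / 3 : ℝ)) :=
    hsum.tsum_pos (fun _ ↦ by positivity) ⊤ (by simp)
  refine ⟨160 * (160 + 2 * |π / 4|) * _, mul_pos (by positivity) hpos, fun x hx K hK ↦ ?_⟩
  have hx0 : 0 < x := one_pos.trans_le hx
  have hmain : π ^ 2 * x ^ 2 / (16 * zetaQi2 * (normI K : ℝ) ^ 2) =
      (π / 4) ^ 2 * (x / K.absNorm) ^ 2 / ∑' I : Ideal GaussianInt, 1 / (I.absNorm : ℝ) ^ 2 := by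
    rw [zetaQi2_eq_tsum, normI_eq_absNorm]
    ring
  have hθ : (4 : ℝ) / 3 = 1 + 1 / 3 := by norm_num
  rw [sep_P_eq_gcdPairs, hmain, hθ, normI_eq_absNorm, mul_div_assoc _ (x ^ _),
    ← div_rpow hx0.le (Nat.cast_nonneg _)]
  exact abs_ncard_gcdPairs_sub_le (by norm_num)
    (fun t ↦ abs_ncard_idealsNormLE_gaussianInt_sub_le) hsum hx0 hK
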